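/- arXiv:2206.09525 — 8 statements merged into one kernel-verified Lean document; each statement's English description precedes it below -/
import Mathlib

section
/- Let n ≥ 1 and let v₀,…,v_n be n+1 affinely independent points of ℝⁿ with barycentric coordinates λ₀,…,λ_n. Let α ∈ ℕ^{n+1} be a multi-index, let f be a nonempty proper subset of {0,…,n}, and let x ∈ ℝⁿ satisfy λ_i(x) = 0 for every i ∉ f. Then for every multi-index β ∈ ℕⁿ (encoding iterated partial derivatives in the standard coordinate directions of ℝⁿ) with |β| < Σ_{i∉f} α_i, the partial derivative ∂^β(λ^α) vanishes at x. In other words, the Bernstein polynomial λ^α vanishes on the sub-simplex f to order dist(α,f) = Σ_{i∉f} α_i. -/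
open scoped BigOperators

section VanishingOrder

variable {E : Type*} [NormedAddCommGroup E] [NormedSpace ℝ E]

/-- The function `g` is smooth and all its derivatives of order `< k` vanish at `x`. -/
def VanishesToOrder (k : ℕ) (g : E → ℝ) (x : E) : Prop :=
  ContDiff ℝ ((⊤ : ℕ∞) : WithTop ℕ∞) g ∧ ∀ m < k, iteratedFDeriv ℝ m g x = 0

theorem VanishesToOrder.mul {k l : ℕ} {g h : E → ℝ} {x : E}
    (hg : VanishesToOrder k g x) (hh : VanishesToOrder l h x) :
    VanishesToOrder (k + l) (fun y => g y * h y) x := by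
  refine ⟨hg.1.mul hh.1, fun m hm => norm_le_zero_iff.mp ?_⟩
  refine (norm_iteratedFDeriv_mul_le hg.1 hh.1 x
    (by exact_mod_cast (le_top : (m : ℕ∞) ≤ ⊤))).trans (le_of_eq ?_)
  refine Finset.sum_eq_zero fun i hi => ?_
  rcases lt_or_ge i k with hik | hik
  · simp [hg.2 i hik]
  · have him : i ≤ m := Finset.mem_range_succ_iff.mp hi
    simp [hh.2 (m - i) (by omega)]

theorem VanishesToOrder.one (x : E) : VanishesToOrder 0 (fun _ => 1) x :=
  ⟨contDiff_const, fun _ hm => absurd hm (Nat.not_lt_zero _)⟩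

theorem VanishesToOrder.pow {k : ℕ} {g : E → ℝ} {x : E} (hg : VanishesToOrder k g x) (a : ℕ) :
    VanishesToOrder (a * k) (fun y => g y ^ a) x := by
  induction a with
  | zero => simpa using VanishesToOrder.one x
  | succ a ih => simpa only [pow_succ, Nat.succ_mul] using ih.mul hg

theorem VanishesToOrder.prod {ι : Type*} (s : Finset ι) {k : ι → ℕ} {g : ι → E → ℝ} {x : E}
    (hg : ∀ i ∈ s, VanishesToOrder (k i) (g i) x) :
    VanishesToOrder (∑ i ∈ s, k i) (fun y => ∏ i ∈ s, g i y) x := by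
  classical
  induction s using Finset.induction_on with
  | empty => simpa using VanishesToOrder.one x
  | insert i s hi ih =>
    simp only [Finset.sum_insert hi, Finset.prod_insert hi]
    exact (hg i (Finset.mem_insert_self i s)).mul
      (ih fun j hj => hg j (Finset.mem_insert_of_mem hj))

theorem AffineMap.vanishesToOrder [FiniteDimensional ℝ E] (g : E →ᵃ[ℝ] ℝ) {x : E} {k : ℕ}
    (hk : k ≤ 1) (hx : k = 1 → g x = 0) : VanishesToOrder k g x := by
  refine ⟨(⟨g, g.continuous_of_finiteDimensional⟩ : E →ᴬ[ℝ] ℝ).contDiff, fun m hm => ?_⟩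
  obtain rfl : m = 0 := by omega
  ext w
  simpa using hx (by omega)

end VanishingOrder

/-- A Bernstein polynomial `λ^α` vanishes on the sub-simplex `f` to order
`dist(α, f) = ∑_{i ∉ f} α_i`: every iterated partial derivative (in standard coordinate
directions) of order `< dist(α,f)` vanishes at any point `x` of the sub-simplex `f`. -/
theorem bernstein_vanishes_on_subsimplex
    (n : ℕ) (hn : 1 ≤ n)
    (v : Fin (n + 1) → (Fin n → ℝ)) (hv : AffineIndependent ℝ v)
    (lam : Fin (n + 1) → ((Fin n → ℝ) →ᵃ[ℝ] ℝ))
    (hlam : ∀ i j, lam i (v j) = if i = j then 1 else 0)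
    (hsum : ∀ x : Fin n → ℝ, ∑ i, lam i x = 1)
    (α : Fin (n + 1) → ℕ)
    (f : Finset (Fin (n + 1))) (hf1 : f.Nonempty) (hf2 : f ≠ Finset.univ)
    (x : Fin n → ℝ) (hx : ∀ i ∉ f, lam i x = 0)
    (m : ℕ) (hm : m < ∑ i ∈ fᶜ, α i)
    (d : Fin m → Fin n) :
    iteratedFDeriv ℝ m (fun y => ∏ i, (lam i y) ^ (α i)) x
      (fun j => Pi.single (d j) 1) = 0 := by
  have hvan : VanishesToOrder (∑ i, α i * if i ∈ f then 0 else 1)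
      (fun y => ∏ i, (lam i y) ^ (α i)) x := by
    refine VanishesToOrder.prod _ fun i _ => ((lam i).vanishesToOrder ?_ ?_).pow (α i)
    · split_ifs <;> simp
    · intro h
      exact hx i fun hi => by simp [hi] at h
  have horder : ∑ i, α i * (if i ∈ f then 0 else 1) = ∑ i ∈ fᶜ, α i := by
    simp [mul_ite, Finset.sum_ite, ← Finset.filter_notMem_eq_sdiff,
      Finset.compl_eq_univ_sdiff]
  rw [hvan.2 m (horder ▸ hm), zero_apply]
end

section
/- Let n ≥ 1 and let α = (α₀,α₁,…,α_n) ∈ ℕ^{n+1}. Then the Lebesgue integral over the standard n-simplex Δⁿ = {x ∈ ℝⁿ : x_i ≥ 0 for all i, x₁+⋯+x_n ≤ 1} of the function x ↦ (∏_{i=1}^n x_i^{α_i})·(1 − x₁ − ⋯ − x_n)^{α₀} equals (α₀!·α₁!⋯α_n!)/(n+|α|)!, where |α| = α₀+⋯+α_n. Equivalently, for the barycentric monomial λ^α of degree k = |α| on a simplex T one has ∫_T λ^α/α! dx = n!·|T|/(k+n)!. -/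
open scoped BigOperators
open MeasureTheory

/-- The Beta integral over `[0, c]` with natural exponents. -/
lemma integral_pow_mul_sub_pow (c : ℝ) (a b : ℕ) :
    ∫ t in (0 : ℝ)..c, t ^ a * (c - t) ^ b =
      (a.factorial * b.factorial : ℝ) / (a + b + 1).factorial * c ^ (a + b + 1) := by
  induction a generalizing b with
  | zero =>
    have h := intervalIntegral.integral_comp_sub_left (a := 0) (b := c) (fun t : ℝ => t ^ b) c
    simp only [pow_zero, one_mul, zero_add, Nat.factorial_succ, h]
    have := b.factorial_ne_zero
    simp
    field_simp
  | succ a ih =>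
    have hb : (b + 1 : ℝ) ≠ 0 := by positivity
    have hu : ∀ t ∈ Set.uIcc 0 c,
        HasDerivAt (fun t : ℝ => t ^ (a + 1)) ((a + 1 : ℝ) * t ^ a) t := fun t _ => by
      simpa using hasDerivAt_pow (a + 1) t
    have hv : ∀ t ∈ Set.uIcc 0 c,
        HasDerivAt (fun t : ℝ => -((c - t) ^ (b + 1) / (b + 1))) ((c - t) ^ b) t := fun t _ => by
      have h := ((((hasDerivAt_id t).const_sub c).pow (b + 1)).div_const (b + 1 : ℝ)).neg
      refine h.congr_deriv ?_
      simp
      field_simp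
    have h := intervalIntegral.integral_mul_deriv_eq_deriv_mul hu hv
      ((by fun_prop : Continuous _).intervalIntegrable _ _)
      ((by fun_prop : Continuous _).intervalIntegrable _ _)
    have hrec : ∀ t : ℝ, (a + 1 : ℝ) * t ^ a * -((c - t) ^ (b + 1) / (b + 1)) =
        -((a + 1 : ℝ) / (b + 1)) * (t ^ a * (c - t) ^ (b + 1)) := fun t => by ring
    simp only [hrec, intervalIntegral.integral_const_mul, ih] at h
    rw [h, show a + (b + 1) + 1 = a + 1 + b + 1 by ring, Nat.factorial_succ a,
      Nat.factorial_succ b]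
    push_cast
    simp
    field_simp

/-- The solid simplex of side `c` is compact. -/
lemma isCompact_nonneg_sum_le (n : ℕ) (c : ℝ) :
    IsCompact {x : Fin n → ℝ | (∀ i, 0 ≤ x i) ∧ ∑ i, x i ≤ c} := by
  refine (isCompact_Icc (a := (0 : Fin n → ℝ)) (b := fun _ => c)).of_isClosed_subset ?_ ?_
  · simp only [Set.ofPred_and, Set.ofPred_forall]
    exact (isClosed_iInter fun i => isClosed_le continuous_const (continuous_apply i)).inter
      (isClosed_le (by fun_prop) continuous_const)
  · rintro x ⟨h0, h1⟩
    exact ⟨h0, fun i =>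
      (Finset.single_le_sum (fun j _ => h0 j) (Finset.mem_univ i)).trans h1⟩

/-- The Dirichlet integral with natural exponents over the solid simplex of side `c`. -/
lemma integral_prod_pow_mul_sub_sum_pow (n : ℕ) (c : ℝ) (hc : 0 ≤ c) (a : Fin n → ℕ) (b : ℕ) :
    ∫ x in {x : Fin n → ℝ | (∀ i, 0 ≤ x i) ∧ ∑ i, x i ≤ c},
        (∏ i, x i ^ a i) * (c - ∑ i, x i) ^ b =
      (∏ i, ((a i).factorial : ℝ)) * b.factorial / (n + ∑ i, a i + b).factorial *
        c ^ (n + ∑ i, a i + b) := by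
  induction n generalizing c with
  | zero =>
    have := b.factorial_ne_zero
    simp [hc, Measure.volume_pi_eq_dirac 0, this]
  | succ n ih =>
    set F : (Fin (n + 1) → ℝ) → ℝ := fun x => (∏ i, x i ^ a i) * (c - ∑ i, x i) ^ b with hF
    set S := {x : Fin (n + 1) → ℝ | (∀ i, 0 ≤ x i) ∧ ∑ i, x i ≤ c} with hS
    have hScomp : IsCompact S := isCompact_nonneg_sum_le (n + 1) c
    have hint : Integrable (S.indicator F) := by
      rw [integrable_indicator_iff hScomp.measurableSet]
      exact (by fun_prop : Continuous F).continuousOn.integrableOn_compact hScomp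
    have hmp := (volume_preserving_piFinSuccAbove (fun _ : Fin (n + 1) => ℝ) 0).symm
    have hinner : ∀ t : ℝ, ∫ y : Fin n → ℝ, S.indicator F (Fin.cons t y) =
        (Set.Icc 0 c).indicator (fun t => (∏ i : Fin n, ((a i.succ).factorial : ℝ)) * b.factorial /
          (n + ∑ i : Fin n, a i.succ + b).factorial *
            (t ^ a 0 * (c - t) ^ (n + ∑ i : Fin n, a i.succ + b))) t := by
      intro t
      by_cases ht : t ∈ Set.Icc 0 c
      · have hpt : ∀ y : Fin n → ℝ, S.indicator F (Fin.cons t y) =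
            {y : Fin n → ℝ | (∀ i, 0 ≤ y i) ∧ ∑ i, y i ≤ c - t}.indicator (fun y =>
              t ^ a 0 * ((∏ i, y i ^ a i.succ) * (c - t - ∑ i, y i) ^ b)) y := fun y => by
          simp only [Set.indicator_apply, hS, hF, Set.mem_ofPred_eq, Fin.forall_fin_succ,
            Fin.sum_univ_succ, Fin.prod_univ_succ, Fin.cons_zero, Fin.cons_succ, ht.1, true_and,
            le_sub_iff_add_le', sub_sub, mul_assoc]
        simp only [hpt]
        rw [integral_indicator (isCompact_nonneg_sum_le n _).measurableSet, integral_const_mul,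
          ih (c - t) (sub_nonneg.2 ht.2), Set.indicator_of_mem ht]
        ring
      · rw [Set.indicator_of_notMem ht]
        refine integral_eq_zero_of_ae (.of_forall fun y => Set.indicator_of_notMem ?_ _)
        rintro ⟨h0, h1⟩
        simp only [Fin.forall_fin_succ, Fin.sum_univ_succ, Fin.cons_zero, Fin.cons_succ] at h0 h1
        exact ht ⟨h0.1, by linarith [Finset.sum_nonneg fun i (_ : i ∈ Finset.univ) => h0.2 i]⟩
    have hcons : ∀ z : ℝ × (Fin n → ℝ),
        (MeasurableEquiv.piFinSuccAbove (fun _ : Fin (n + 1) => ℝ) 0).symm z =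
          Fin.cons z.1 z.2 := fun z => by
      simp [MeasurableEquiv.piFinSuccAbove, Fin.consEquiv]
    have hprod : ∫ x, S.indicator F x = ∫ t : ℝ, ∫ y : Fin n → ℝ, S.indicator F (Fin.cons t y) := by
      rw [← hmp.integral_comp', Measure.volume_eq_prod, integral_prod]
      · simp only [hcons]
      · exact hmp.integrable_comp_of_integrable hint
    rw [← integral_indicator hScomp.measurableSet, hprod]
    simp only [hinner]
    rw [integral_indicator measurableSet_Icc, integral_const_mul, integral_Icc_eq_integral_Ioc,
      ← intervalIntegral.integral_of_le hc, integral_pow_mul_sub_pow, Fin.prod_univ_succ,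
      Fin.sum_univ_succ, show a 0 + (n + ∑ i : Fin n, a i.succ + b) + 1 =
        n + 1 + (a 0 + ∑ i : Fin n, a i.succ) + b by ring]
    have := (n + ∑ i : Fin n, a i.succ + b).factorial_ne_zero
    field_simp

/-- integral of a barycentric monomial over the standard `n`-simplex:
`∫_{Δⁿ} (∏_{i=1}^n x_i^{α_i}) (1 - x₁ - ⋯ - x_n)^{α₀} dx = α! / (n + |α|)!`. -/
theorem integral_bernstein_standard_simplex
    (n : ℕ) (hn : 1 ≤ n) (α : Fin (n + 1) → ℕ) :
    (∫ x in {x : Fin n → ℝ | (∀ i, 0 ≤ x i) ∧ ∑ i, x i ≤ 1},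
        (∏ i : Fin n, (x i) ^ (α i.succ)) * (1 - ∑ i, x i) ^ (α 0)) =
      (∏ i, (Nat.factorial (α i) : ℝ)) / (Nat.factorial (n + ∑ i, α i) : ℝ) := by
  rw [integral_prod_pow_mul_sub_sum_pow n 1 zero_le_one, one_pow, mul_one, Fin.prod_univ_succ,
    Fin.sum_univ_succ, mul_comm, add_comm (α 0), add_assoc]
end

section
/- Let n ≥ 1, let v₀,…,v_n be n+1 affinely independent points of ℝⁿ with barycentric coordinates λ₀,…,λ_n, let α ∈ ℕ^{n+1}, and let 0 ≤ i ≠ j ≤ n. Write t_{j,i} = v_i − v_j and ε_i for the i-th unit multi-index. Then, as functions on ℝⁿ, the directional derivative of λ^{α+ε_i} along t_{j,i} satisfies ∇(λ^{α+ε_i})·t_{j,i} = (α_i+1)·λ^α − α_j·λ^{α+ε_i−ε_j}, where for α_j = 0 the second term is interpreted as 0. -/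
/-- An affine functional on a finite-dimensional space has its linear part as derivative. -/
lemma AffineMap.hasFDerivAt_toContinuousLinearMap {E : Type*} [NormedAddCommGroup E]
    [NormedSpace ℝ E] [FiniteDimensional ℝ E] (f : E →ᵃ[ℝ] ℝ) (x : E) :
    HasFDerivAt f (LinearMap.toContinuousLinearMap f.linear) x := by
  rw [AffineMap.decomp f]
  exact (LinearMap.toContinuousLinearMap f.linear).hasFDerivAt.add_const (f 0)

/-- The derivative of a monomial in affine functionals. -/
lemma fderiv_prod_affineMap_pow {E ι : Type*} [NormedAddCommGroup E] [NormedSpace ℝ E]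
    [FiniteDimensional ℝ E] [Fintype ι] [DecidableEq ι] (f : ι → E →ᵃ[ℝ] ℝ) (β : ι → ℕ)
    (x w : E) :
    fderiv ℝ (fun y => ∏ ℓ, f ℓ y ^ β ℓ) x w
      = ∑ ℓ, (f ℓ).linear w * (β ℓ * ∏ m, f m x ^ (β m - if m = ℓ then 1 else 0)) := by
  have h := HasFDerivAt.finsetProd (u := Finset.univ) (x := x) fun ℓ _ =>
    ((f ℓ).hasFDerivAt_toContinuousLinearMap x).pow (β ℓ)
  rw [h.fderiv, sum_apply]
  refine Finset.sum_congr rfl fun ℓ _ => ?_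
  have hprod : ∏ m ∈ Finset.univ.erase ℓ, f m x ^ (β m - if m = ℓ then 1 else 0)
      = ∏ m ∈ Finset.univ.erase ℓ, f m x ^ β m :=
    Finset.prod_congr rfl fun m hm => by simp [Finset.ne_of_mem_erase hm]
  rw [← Finset.mul_prod_erase _ _ (Finset.mem_univ ℓ), hprod]
  simp
  ring

open scoped BigOperators

/-- `∇(λ^{α+ε_i}) ⋅ t_{j,i} = (α_i + 1) λ^α − α_j λ^{α+ε_i−ε_j}`,
where `t_{j,i} = v_i − v_j` and `ε_i` is the `i`-th unit multi-index
(with truncated subtraction in the exponent, the second term being killed by the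
coefficient `α_j` when `α_j = 0`). -/
theorem directional_deriv_bernstein
    (n : ℕ) (hn : 1 ≤ n)
    (v : Fin (n + 1) → (Fin n → ℝ)) (hv : AffineIndependent ℝ v)
    (lam : Fin (n + 1) → ((Fin n → ℝ) →ᵃ[ℝ] ℝ))
    (hlam : ∀ i j, lam i (v j) = if i = j then 1 else 0)
    (hsum : ∀ x : Fin n → ℝ, ∑ i, lam i x = 1)
    (α : Fin (n + 1) → ℕ) (i j : Fin (n + 1)) (hij : i ≠ j)
    (x : Fin n → ℝ) :
    fderiv ℝ (fun y => ∏ ℓ, (lam ℓ y) ^ (α ℓ + if ℓ = i then 1 else 0)) x (v i - v j)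
      = ((α i : ℝ) + 1) * ∏ ℓ, (lam ℓ x) ^ (α ℓ)
        - (α j : ℝ) * ∏ ℓ, (lam ℓ x) ^ ((α ℓ + if ℓ = i then 1 else 0)
            - if ℓ = j then 1 else 0) := by
  have hlin (ℓ : Fin (n + 1)) : (lam ℓ).linear (v i - v j)
      = (if ℓ = i then 1 else 0) - if ℓ = j then 1 else 0 := by
    rw [← hlam, ← hlam, ← vsub_eq_sub, AffineMap.linearMap_vsub, vsub_eq_sub]
  rw [fderiv_prod_affineMap_pow]
  simp [hlin, sub_mul, Finset.sum_sub_distrib, hij.symm]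
end

section
/- Let n ≥ 1, k ≥ 0, and let T ⊂ ℝⁿ be the simplex with affinely independent vertices v₀,…,v_n, with barycentric coordinates λ₀,…,λ_n. Then the space of real polynomial functions on ℝⁿ of total degree at most k whose Lebesgue integral over T vanishes equals the real span of the set {λ^α/α! − λ^β/β! : α, β ∈ 𝕋ⁿ_k with Σ_i |α_i − β_i| = 2}. -/
open scoped BigOperators
open MeasureTheory

open Filter Topology

section Integral

variable {ι E : Type*} [Fintype ι] [NormedAddCommGroup E] [NormedSpace ℝ E]

/-- The scaled barycentric monomial `λ^α / α!`. -/
noncomputable def scaledMonomial (b : AffineBasis ι ℝ E) (α : ι → ℕ) (x : E) : ℝ :=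
  ∏ l, b.coord l x ^ α l / (α l).factorial

theorem coord_add_smul_sub {ι E : Type*} [NormedAddCommGroup E] [NormedSpace ℝ E] [DecidableEq ι]
    (b : AffineBasis ι ℝ E) (i j l : ι) (x : E) (s : ℝ) :
    b.coord l (x + s • (b i - b j)) =
      b.coord l x + s * ((if l = i then 1 else 0) - (if l = j then 1 else 0)) := by
  have h := (b.coord l).map_vadd x (s • (b i - b j))
  have h' := (b.coord l).linearMap_vsub (b i) (b j)
  simp only [vadd_eq_add, vsub_eq_sub, map_smul, smul_eq_mul] at h h'
  rw [add_comm x, h, h', b.coord_apply, b.coord_apply]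
  ring

theorem scaledMonomial_eq_mul_mul_prod_erase [DecidableEq ι] (b : AffineBasis ι ℝ E) (α : ι → ℕ)
    {i j : ι} (hij : i ≠ j) (x : E) :
    scaledMonomial b α x =
      b.coord i x ^ α i / (α i).factorial * (b.coord j x ^ α j / (α j).factorial *
        ∏ l ∈ (Finset.univ.erase i).erase j, b.coord l x ^ α l / (α l).factorial) := by
  rw [scaledMonomial, ← Finset.mul_prod_erase Finset.univ _ (Finset.mem_univ i),
    ← Finset.mul_prod_erase (Finset.univ.erase i) _
      (Finset.mem_erase.2 ⟨hij.symm, Finset.mem_univ j⟩)]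

theorem hasDerivAt_pow_succ_div_factorial (m : ℕ) {f : ℝ → ℝ} {f' s : ℝ} (hf : HasDerivAt f f' s) :
    HasDerivAt (fun r => f r ^ (m + 1) / (m + 1).factorial) (f s ^ m / m.factorial * f') s := by
  refine ((hf.pow (m + 1)).div_const ((m + 1).factorial : ℝ)).congr_deriv ?_
  rw [Nat.factorial_succ]
  have := Nat.factorial_ne_zero m
  push_cast
  field_simp

theorem hasDerivAt_scaledMonomial_line [DecidableEq ι] (b : AffineBasis ι ℝ E) (γ : ι → ℕ)
    {i j : ι} (hij : i ≠ j) (x : E) (s : ℝ) :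
    HasDerivAt
      (fun r : ℝ => scaledMonomial b (γ + Pi.single i 1 + Pi.single j 1) (x + r • (b i - b j)))
      (scaledMonomial b (γ + Pi.single j 1) (x + s • (b i - b j)) -
        scaledMonomial b (γ + Pi.single i 1) (x + s • (b i - b j))) s := by
  have hji := hij.symm
  set R : ℝ := ∏ l ∈ (Finset.univ.erase i).erase j, b.coord l x ^ γ l / (γ l).factorial with hR
  have hprod : ∀ α : ι → ℕ, (∀ l, l ≠ i → l ≠ j → α l = γ l) → ∀ r : ℝ,
      ∏ l ∈ (Finset.univ.erase i).erase j,
        b.coord l (x + r • (b i - b j)) ^ α l / (α l).factorial = R := by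
    intro α hα r
    refine Finset.prod_congr rfl fun l hl => ?_
    simp only [Finset.mem_erase, Finset.mem_univ, and_true] at hl
    rw [coord_add_smul_sub, hα l hl.2 hl.1, if_neg hl.2, if_neg hl.1]
    simp
  simp_rw [scaledMonomial_eq_mul_mul_prod_erase b _ hij]
  rw [hprod (γ + Pi.single j 1) (by intro l h1 h2; simp [h2]),
    hprod (γ + Pi.single i 1) (by intro l h1 h2; simp [h1])]
  simp_rw [hprod (γ + Pi.single i 1 + Pi.single j 1) (by intro l h1 h2; simp [h1, h2]),
    coord_add_smul_sub]
  simp only [Pi.add_apply, Pi.single_eq_same, Pi.single_eq_of_ne hij, Pi.single_eq_of_ne hji,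
    add_zero, if_true, if_neg hij, if_neg hji, sub_zero, zero_sub, mul_one]
  have hi : HasDerivAt (fun r : ℝ => b.coord i x + r) 1 s := (hasDerivAt_id s).const_add _
  have hj : HasDerivAt (fun r : ℝ => b.coord j x + r * -1) (-1) s := by
    simpa using ((hasDerivAt_id s).mul_const (-1)).const_add (b.coord j x)
  refine ((hasDerivAt_pow_succ_div_factorial (γ i) hi).mul
    ((hasDerivAt_pow_succ_div_factorial (γ j) hj).mul_const R)).congr_deriv ?_
  ring

theorem scaledMonomial_nonneg (b : AffineBasis ι ℝ E) (α : ι → ℕ) {x : E}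
    (hx : ∀ l, 0 ≤ b.coord l x) : 0 ≤ scaledMonomial b α x :=
  Finset.prod_nonneg fun l _ => div_nonneg (pow_nonneg (hx l) _) (Nat.cast_nonneg _)

theorem scaledMonomial_le_coord (b : AffineBasis ι ℝ E) {α : ι → ℕ} {i : ι} (hi : α i ≠ 0) {x : E}
    (hx : ∀ l, 0 ≤ b.coord l x) : scaledMonomial b α x ≤ b.coord i x := by
  classical
  have h1 : ∀ l, b.coord l x ≤ 1 := fun l => by
    rw [← b.sum_coord_apply_eq_one x]
    exact Finset.single_le_sum (fun l _ => hx l) (Finset.mem_univ l)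
  have hfac : ∀ l, (1 : ℝ) ≤ (α l).factorial := fun l => by
    exact_mod_cast Nat.one_le_iff_ne_zero.2 (Nat.factorial_ne_zero _)
  rw [scaledMonomial, ← Finset.mul_prod_erase Finset.univ _ (Finset.mem_univ i)]
  refine (mul_le_of_le_one_right (div_nonneg (pow_nonneg (hx i) _) (Nat.cast_nonneg _))
    (Finset.prod_le_one (fun l _ => div_nonneg (pow_nonneg (hx l) _) (Nat.cast_nonneg _))
      fun l _ => ?_)).trans ?_
  · exact div_le_one_of_le₀ ((pow_le_one₀ (hx l) (h1 l)).trans (hfac l)) (Nat.cast_nonneg _)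
  · exact (div_le_self (pow_nonneg (hx i) _) (hfac i)).trans (pow_le_of_le_one (hx i) (h1 i) hi)

theorem continuous_scaledMonomial [FiniteDimensional ℝ E] (b : AffineBasis ι ℝ E) (α : ι → ℕ) :
    Continuous (scaledMonomial b α) :=
  continuous_finsetProd _ fun l _ =>
    (((b.coord l).continuous_of_finiteDimensional).pow _).div_const _

theorem isCompact_convexHull_range (v : ι → E) : IsCompact (convexHull ℝ (Set.range v)) :=
  (Set.finite_range v).isCompact_convexHull ℝ

variable [DecidableEq ι]

/-- The zero extension outside the simplex of a scaled monomial vanishing on the faces opposite to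
`b i` and `b j` is Lipschitz in the direction `b i - b j`. -/
theorem exists_abs_indicator_scaledMonomial_sub_le [FiniteDimensional ℝ E] (b : AffineBasis ι ℝ E)
    (γ : ι → ℕ) {i j : ι} (hij : i ≠ j) :
    ∃ C : ℝ, ∀ (x : E) (h : ℝ), 0 ≤ h →
      |(convexHull ℝ (Set.range b)).indicator
          (scaledMonomial b (γ + Pi.single i 1 + Pi.single j 1)) (x + h • (b i - b j)) -
        (convexHull ℝ (Set.range b)).indicator
          (scaledMonomial b (γ + Pi.single i 1 + Pi.single j 1)) x| ≤ C * h := by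
  set T := convexHull ℝ (Set.range b) with hT
  set α := γ + Pi.single i 1 + Pi.single j 1 with hα
  have hmem : ∀ x, x ∈ T ↔ ∀ l, 0 ≤ b.coord l x := fun x => by
    rw [hT, b.convexHull_eq_nonneg_coord]; rfl
  have hcont := (continuous_scaledMonomial b (γ + Pi.single j 1)).sub
    (continuous_scaledMonomial b (γ + Pi.single i 1))
  obtain ⟨C, hC⟩ := (isCompact_convexHull_range b).exists_bound_of_continuousOn hcont.continuousOn
  have hji := hij.symm
  refine ⟨max C 1, fun x h hh => ?_⟩
  have h1 : h ≤ max C 1 * h := le_mul_of_one_le_left hh (le_max_right _ _)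
  by_cases hx : x ∈ T <;> by_cases hy : x + h • (b i - b j) ∈ T
  · rw [Set.indicator_of_mem hx, Set.indicator_of_mem hy]
    have hseg : ∀ s ∈ Set.Ico 0 h, x + s • (b i - b j) ∈ T := fun s hs => by
      have := (convex_convexHull ℝ (Set.range b)).add_smul_mem hx hy
        (t := s / h) ⟨div_nonneg hs.1 hh, div_le_one_of_le₀ hs.2.le hh⟩
      rwa [smul_smul, div_mul_cancel₀ _ (hs.1.trans_lt hs.2).ne'] at this
    have := norm_image_sub_le_of_norm_deriv_le_segment'
      (f := fun s : ℝ => scaledMonomial b α (x + s • (b i - b j)))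
      (fun s _ => (hasDerivAt_scaledMonomial_line b γ hij x s).hasDerivWithinAt)
      (fun s hs => hC _ (hseg s hs)) h (Set.right_mem_Icc.2 hh)
    rw [zero_smul, add_zero, sub_zero, Real.norm_eq_abs] at this
    exact this.trans (mul_le_mul_of_nonneg_right (le_max_left _ _) hh)
  · rw [Set.indicator_of_mem hx, Set.indicator_of_notMem hy, zero_sub, abs_neg]
    rw [hmem] at hx
    rw [abs_of_nonneg (scaledMonomial_nonneg b α hx)]
    refine (scaledMonomial_le_coord b (i := j) (by simp [hα]) hx).trans (le_trans ?_ h1)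
    by_contra! hlt
    refine hy ((hmem _).2 fun l => ?_)
    rw [coord_add_smul_sub]
    have := hx l
    by_cases hlj : l = j
    · subst hlj; simp [hji]; linarith
    · by_cases hli : l = i
      · simp [hli, hij]; subst hli; linarith
      · simpa [hlj, hli]
  · rw [Set.indicator_of_mem hy, Set.indicator_of_notMem hx, sub_zero]
    rw [hmem] at hy
    rw [abs_of_nonneg (scaledMonomial_nonneg b α hy)]
    refine (scaledMonomial_le_coord b (i := i) (by simp [hα]) hy).trans (le_trans ?_ h1)
    by_contra! hlt
    refine hx ((hmem _).2 fun l => ?_)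
    have := hy l
    rw [coord_add_smul_sub] at this hlt
    by_cases hlj : l = j
    · subst hlj; simp [hji] at this; linarith
    · by_cases hli : l = i
      · subst hli; simp [hij] at hlt; linarith
      · simpa [hlj, hli] using this
  · rw [Set.indicator_of_notMem hx, Set.indicator_of_notMem hy]
    simpa using hh.trans h1

theorem setIntegral_scaledMonomial_add_single [FiniteDimensional ℝ E] [MeasurableSpace E]
    [BorelSpace E] (μ : Measure E) [μ.IsAddHaarMeasure] (b : AffineBasis ι ℝ E) (γ : ι → ℕ)
    (i j : ι) :
    ∫ x in convexHull ℝ (Set.range b), scaledMonomial b (γ + Pi.single i 1) x ∂μ =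
      ∫ x in convexHull ℝ (Set.range b), scaledMonomial b (γ + Pi.single j 1) x ∂μ := by
  rcases eq_or_ne i j with rfl | hij
  · rfl
  set T := convexHull ℝ (Set.range b) with hT
  set t := b i - b j with ht
  have hcpt : IsCompact T := isCompact_convexHull_range b
  have hint : ∀ α, IntegrableOn (scaledMonomial b α) T μ := fun α =>
    (continuous_scaledMonomial b α).continuousOn.integrableOn_compact hcpt
  set F := T.indicator (scaledMonomial b (γ + Pi.single i 1 + Pi.single j 1)) with hF
  have hFint : Integrable F μ := (integrable_indicator_iff hcpt.measurableSet).2 (hint _)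
  set G := T.indicator fun x =>
    scaledMonomial b (γ + Pi.single j 1) x - scaledMonomial b (γ + Pi.single i 1) x with hG
  suffices hzero : ∫ x, G x ∂μ = 0 by
    rw [hG, integral_indicator hcpt.measurableSet, integral_sub (hint _) (hint _)] at hzero
    linarith
  obtain ⟨C, hC⟩ := exists_abs_indicator_scaledMonomial_sub_le b γ hij
  rw [← hT, ← hF, ← ht] at hC
  obtain ⟨u, -, hu, hu0⟩ := exists_seq_strictAnti_tendsto' (zero_lt_one' ℝ)
  obtain ⟨r, hr⟩ := hcpt.isBounded.subset_closedBall (0 : E)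
  have hlim : Tendsto (fun m => ∫ x, (u m)⁻¹ * (F (x + u m • t) - F x) ∂μ) atTop
      (𝓝 (∫ x, G x ∂μ)) := by
    refine tendsto_integral_of_dominated_convergence
      ((Metric.closedBall (0 : E) (r + ‖t‖)).indicator fun _ => C) (fun m => ?_) ?_ (fun m => ?_) ?_
    · exact (((hFint.comp_add_right _).sub hFint).const_mul _).aestronglyMeasurable
    · exact (integrable_indicator_iff measurableSet_closedBall).2
        (integrableOn_const measure_closedBall_lt_top.ne)
    · refine Eventually.of_forall fun x => ?_
      have hm := hu m
      by_cases hx : x ∈ Metric.closedBall (0 : E) (r + ‖t‖)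
      · rw [Set.indicator_of_mem hx, norm_mul, norm_inv, Real.norm_eq_abs, Real.norm_eq_abs,
          abs_of_pos hm.1, inv_mul_le_iff₀ hm.1, mul_comm]
        exact hC x (u m) hm.1.le
      · have hxT : ∀ s ∈ Set.Icc (0 : ℝ) 1, x + s • t ∉ T := by
          intro s hs hmem
          apply hx
          have h1 := hr hmem
          rw [mem_closedBall_zero_iff] at h1 ⊢
          calc ‖x‖ = ‖(x + s • t) - s • t‖ := by rw [add_sub_cancel_right]
            _ ≤ ‖x + s • t‖ + ‖s • t‖ := norm_sub_le _ _
            _ ≤ r + ‖t‖ := by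
              refine add_le_add h1 ?_
              rw [norm_smul, Real.norm_eq_abs, abs_of_nonneg hs.1]
              exact mul_le_of_le_one_left (norm_nonneg _) hs.2
        have h0 := hxT 0 ⟨le_rfl, zero_le_one⟩
        rw [zero_smul, add_zero] at h0
        rw [Set.indicator_of_notMem hx, hF, Set.indicator_of_notMem h0,
          Set.indicator_of_notMem (hxT (u m) ⟨hm.1.le, hm.2.le⟩)]
        simp
    · have hfr : ∀ᵐ x ∂μ, x ∉ frontier T :=
        measure_eq_zero_iff_ae_notMem.1 ((convex_convexHull ℝ _).addHaar_frontier μ)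
      filter_upwards [hfr] with x hx
      have hline : Tendsto (fun m => x + u m • t) atTop (𝓝 x) := by
        simpa using (hu0.smul_const t).const_add x
      by_cases hxT : x ∈ T
      · have hxi : x ∈ interior T := by
          by_contra hxi
          exact hx ⟨subset_closure hxT, hxi⟩
        have hd := hasDerivAt_scaledMonomial_line b γ hij x 0
        rw [← ht, zero_smul, add_zero, hasDerivAt_iff_tendsto_slope_zero] at hd
        have hu0' : Tendsto u atTop (𝓝[≠] 0) :=
          tendsto_nhdsWithin_iff.2 ⟨hu0, Eventually.of_forall fun m => (hu m).1.ne'⟩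
        rw [hG, Set.indicator_of_mem hxT]
        refine (hd.comp hu0').congr' ?_
        filter_upwards [hline.eventually (mem_interior_iff_mem_nhds.1 hxi)]
          with m (hm : x + u m • t ∈ T)
        rw [hF, Set.indicator_of_mem hm, Set.indicator_of_mem hxT]
        simp
      · rw [hG, Set.indicator_of_notMem hxT]
        refine tendsto_const_nhds.congr' ?_
        filter_upwards [hline.eventually (hcpt.isClosed.isOpen_compl.mem_nhds hxT)]
          with m (hm : x + u m • t ∉ T)
        rw [hF, Set.indicator_of_notMem hm, Set.indicator_of_notMem hxT]
        simp
  refine tendsto_nhds_unique hlim (tendsto_const_nhds.congr fun m => ?_)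
  rw [integral_const_mul, integral_sub (hFint.comp_add_right _) hFint, integral_add_right_eq_self,
    sub_self, mul_zero]

end Integral

section Lattice

theorem sub_mem_of_step {ι R M : Type*} [Fintype ι] [DecidableEq ι] [Ring R] [AddCommGroup M]
    [Module R M] (W : Submodule R M) (k : ℕ) (f : (ι → ℕ) → M)
    (hstep : ∀ (γ : ι → ℕ) (i j : ι), i ≠ j → ∑ l, γ l + 1 = k →
      f (γ + Pi.single i 1) - f (γ + Pi.single j 1) ∈ W)
    {α β : ι → ℕ} (hα : ∑ l, α l = k) (hβ : ∑ l, β l = k) : f α - f β ∈ W := by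
  have hpeel : ∀ (m : ℕ) (α : ι → ℕ), ∑ l, α l = m + 1 →
      ∃ (i : ι) (α' : ι → ℕ), α = α' + Pi.single i 1 ∧ ∑ l, α' l = m := by
    intro m α hα
    obtain ⟨i, -, hi⟩ := Finset.exists_ne_zero_of_sum_ne_zero (hα.trans_ne m.succ_ne_zero)
    have hle : Pi.single i 1 ≤ α := by
      intro l
      rcases eq_or_ne l i with rfl | hl
      · simpa using Nat.one_le_iff_ne_zero.2 hi
      · simp [hl]
    have heq : α = α - Pi.single i 1 + Pi.single i 1 := (tsub_add_cancel_of_le hle).symm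
    refine ⟨i, α - Pi.single i 1, heq, ?_⟩
    rw [heq] at hα
    simpa [Finset.sum_add_distrib] using hα
  induction k generalizing f α β with
  | zero =>
    have h0 : ∀ α : ι → ℕ, ∑ l, α l = 0 → α = 0 := fun α h => by
      ext l
      exact Finset.sum_eq_zero_iff.1 h l (Finset.mem_univ l)
    rw [h0 α hα, h0 β hβ, sub_self]
    exact W.zero_mem
  | succ k ih =>
    obtain ⟨i, α', rfl, hα'⟩ := hpeel k α hα
    obtain ⟨j, β', rfl, hβ'⟩ := hpeel k β hβ
    have h1 : f (α' + Pi.single i 1) - f (β' + Pi.single i 1) ∈ W := by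
      refine ih (fun α => f (α + Pi.single i 1)) (fun γ a c hac hγ => ?_) hα' hβ'
      simp only [add_right_comm γ _ (Pi.single i 1)]
      exact hstep _ a c hac (by simp [Finset.sum_add_distrib, hγ])
    rcases eq_or_ne i j with rfl | hij
    · exact h1
    · have h2 := hstep β' i j hij (by rw [hβ'])
      simpa using W.add_mem h1 h2

theorem sum_natAbs_add_single_sub_add_single {ι : Type*} [Fintype ι] [DecidableEq ι] (γ : ι → ℕ)
    {i j : ι} (hij : i ≠ j) :
    ∑ l, (((γ + Pi.single i 1 : ι → ℕ) l : ℤ) - ((γ + Pi.single j 1 : ι → ℕ) l : ℤ)).natAbs = 2 := by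
  have h : ∀ l, (((γ + Pi.single i 1 : ι → ℕ) l : ℤ) - ((γ + Pi.single j 1 : ι → ℕ) l : ℤ)).natAbs =
      (Pi.single i 1 : ι → ℕ) l + (Pi.single j 1 : ι → ℕ) l := by
    intro l
    by_cases hi : l = i
    · subst hi; simp [hij]
    · by_cases hj : l = j
      · subst hj; simp [hi]
      · simp [hi, hj]
  rw [Finset.sum_congr rfl fun l _ => h l]
  simp [Finset.sum_add_distrib]

end Lattice

section Polynomial

open MvPolynomial

variable {ι σ : Type*} [Fintype ι] [Fintype σ]

theorem exists_eval_eq_affineMap (f : (σ → ℝ) →ᵃ[ℝ] ℝ) :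
    ∃ q : MvPolynomial σ ℝ, q.totalDegree ≤ 1 ∧ ∀ x, f x = eval x q := by
  classical
  refine ⟨C (f 0) + ∑ j, C (f.linear (Pi.single j 1)) * X j, ?_, fun x => ?_⟩
  · refine (totalDegree_add _ _).trans (max_le (by simp) ?_)
    refine totalDegree_finsetSum_le fun j _ => (totalDegree_mul _ _).trans ?_
    simp
  · have h1 : f x = f.linear x + f 0 := congrFun f.decomp x
    have h2 := f.linear.pi_apply_eq_sum_univ x
    have h3 : ∀ j : σ, (fun i => if j = i then (1 : ℝ) else 0) = Pi.single j 1 := fun j => by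
      ext i; simp [Pi.single_apply, eq_comm]
    simp only [h3, smul_eq_mul] at h2
    rw [h1, h2]
    simp [add_comm, mul_comm]

theorem exists_eval_eq_scaledMonomial (b : AffineBasis ι ℝ (σ → ℝ)) (α : ι → ℕ) :
    ∃ q : MvPolynomial σ ℝ, q.totalDegree ≤ ∑ l, α l ∧
      scaledMonomial b α = fun x => eval x q := by
  choose q hq hqe using fun l => exists_eval_eq_affineMap (b.coord l)
  refine ⟨∏ l, q l ^ α l * C ((α l).factorial : ℝ)⁻¹, ?_, ?_⟩
  · refine (totalDegree_finsetProd _ _).trans (Finset.sum_le_sum fun l _ => ?_)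
    refine (totalDegree_mul _ _).trans ?_
    rw [totalDegree_C, add_zero]
    refine (totalDegree_pow _ _).trans ?_
    exact (Nat.mul_le_mul_left _ (hq l)).trans (mul_one _).le
  · ext x
    simp [scaledMonomial, hqe, div_eq_mul_inv]

/-- Every polynomial of total degree at most `k` homogenizes, through `∑ l, λ_l = 1`, to a
combination of the scaled barycentric monomials of degree exactly `k`. -/
theorem eval_mem_span_scaledMonomial (b : AffineBasis ι ℝ (σ → ℝ)) {k : ℕ} {q : MvPolynomial σ ℝ}
    (hq : q.totalDegree ≤ k) :
    (fun x => eval x q) ∈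
      Submodule.span ℝ (scaledMonomial b '' {α | ∑ l, α l = k}) := by
  let L : σ → MvPolynomial ι ℝ := fun s => ∑ l, C (b l s) * X l
  let S : MvPolynomial ι ℝ := ∑ l, X l
  let Q : MvPolynomial ι ℝ := ∑ m ∈ q.support,
    C (q.coeff m) * ((∏ s, L s ^ m s) * S ^ (k - ∑ s, m s))
  have hL : ∀ s, (L s).IsHomogeneous 1 := fun s =>
    IsHomogeneous.sum _ _ _ fun l _ => isHomogeneous_C_mul_X _ l
  have hS : S.IsHomogeneous 1 := IsHomogeneous.sum _ _ _ fun l _ => isHomogeneous_X _ l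
  have hdeg : ∀ m ∈ q.support, ∑ s, m s ≤ k := fun m hm => by
    refine le_trans ?_ ((le_totalDegree hm).trans hq)
    rw [Finsupp.sum_fintype _ _ fun _ => rfl]
  have hQ : Q.IsHomogeneous k := by
    refine IsHomogeneous.sum _ _ _ fun m hm => IsHomogeneous.C_mul ?_ _
    have h1 := IsHomogeneous.prod Finset.univ (fun s => L s ^ m s) (fun s => 1 * m s)
      fun s _ => (hL s).pow (m s)
    have h2 := h1.mul (hS.pow (k - ∑ s, m s))
    simpa [Nat.add_sub_cancel' (hdeg m hm)] using h2
  have heval : ∀ x, eval x q = eval (fun l => b.coord l x) Q := by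
    intro x
    have hSx : ∑ l, b.coord l x = 1 := b.sum_coord_apply_eq_one x
    have hLx : ∀ s, ∑ l, b l s * b.coord l x = x s := fun s => by
      have := congrFun (b.linear_combination_coord_eq_self x) s
      simpa [Finset.sum_apply, mul_comm] using this
    simp only [Q, L, S, map_sum, map_mul, map_prod, map_pow, eval_C, eval_X, hSx, hLx, one_pow,
      mul_one]
    exact eval_eq' x q
  have hfun : (fun x => eval x q) = ∑ α ∈ Q.support,
      (Q.coeff α * ∏ l, ((α l).factorial : ℝ)) • scaledMonomial b α := by
    ext x
    rw [heval, eval_eq', Finset.sum_apply]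
    refine Finset.sum_congr rfl fun α _ => ?_
    have hne : ∏ l, ((α l).factorial : ℝ) ≠ 0 :=
      Finset.prod_ne_zero_iff.2 fun l _ => Nat.cast_ne_zero.2 (Nat.factorial_ne_zero _)
    simp only [Pi.smul_apply, smul_eq_mul, scaledMonomial, Finset.prod_div_distrib]
    field_simp
  rw [hfun]
  refine Submodule.sum_mem _ fun α hα => Submodule.smul_mem _ _ (Submodule.subset_span ⟨α, ?_, rfl⟩)
  have := hQ.degree_eq_sum_deg_support hα
  rw [Set.mem_ofPred_eq, this]
  exact (Finset.sum_subset (Finset.subset_univ _) fun l _ hl => Finsupp.notMem_support_iff.1 hl).symm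

end Polynomial

section Simplex

variable {n : ℕ}

theorem AffineBasis.eq_coord_of_apply {ι E : Type*} [Fintype ι] [DecidableEq ι] [AddCommGroup E]
    [Module ℝ E] (b : AffineBasis ι ℝ E) (i : ι) {f : E →ᵃ[ℝ] ℝ}
    (hf : ∀ j, f (b j) = if i = j then 1 else 0) : f = b.coord i := by
  ext x
  have hx := b.affineCombination_coord_eq_self x
  have hs := b.sum_coord_apply_eq_one x
  have hfb : f ∘ b = b.coord i ∘ b := funext fun j => by simp [hf, b.coord_apply]
  rw [← hx, Finset.map_affineCombination _ _ _ hs, Finset.map_affineCombination _ _ _ hs, hfb]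

theorem exists_sub_smul_scaledMonomial_mem {ι σ : Type*} [Fintype ι] [Fintype σ]
    (b : AffineBasis ι ℝ (σ → ℝ)) {k : ℕ} {α₀ : ι → ℕ}
    {W : Submodule ℝ ((σ → ℝ) → ℝ)}
    (hW : ∀ α, ∑ l, α l = k → scaledMonomial b α - scaledMonomial b α₀ ∈ W)
    {q : MvPolynomial σ ℝ} (hq : q.totalDegree ≤ k) :
    ∃ c : ℝ, (fun x => MvPolynomial.eval x q) - c • scaledMonomial b α₀ ∈ W := by
  have hle : Submodule.span ℝ (scaledMonomial b '' {α | ∑ l, α l = k}) ≤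
      W ⊔ Submodule.span ℝ {scaledMonomial b α₀} := by
    rw [Submodule.span_le]
    rintro _ ⟨α, hα, rfl⟩
    rw [← sub_add_cancel (scaledMonomial b α) (scaledMonomial b α₀)]
    exact Submodule.add_mem_sup (hW α hα) (Submodule.mem_span_singleton_self _)
  obtain ⟨w, hw, z, hz, hwz⟩ := Submodule.mem_sup.1 (hle (eval_mem_span_scaledMonomial b hq))
  obtain ⟨c, rfl⟩ := Submodule.mem_span_singleton.1 hz
  exact ⟨c, by rwa [← hwz, add_sub_cancel_right]⟩

theorem integrableOn_eval_convexHull (v : Fin (n + 1) → Fin n → ℝ) (q : MvPolynomial (Fin n) ℝ) :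
    IntegrableOn (fun x => MvPolynomial.eval x q) (convexHull ℝ (Set.range v)) :=
  (MvPolynomial.continuous_eval q).continuousOn.integrableOn_compact (isCompact_convexHull_range v)

/-- The polynomial functions of total degree at most `k` with vanishing integral over the simplex
spanned by `v`. -/
noncomputable def meanZeroPolynomials (v : Fin (n + 1) → Fin n → ℝ) (k : ℕ) :
    Submodule ℝ ((Fin n → ℝ) → ℝ) where
  carrier := {p | (∃ q : MvPolynomial (Fin n) ℝ, q.totalDegree ≤ k ∧
      p = fun x => MvPolynomial.eval x q) ∧ (∫ x in convexHull ℝ (Set.range v), p x) = 0}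
  add_mem' := by
    rintro _ _ ⟨⟨p, hp, rfl⟩, hp0⟩ ⟨⟨q, hq, rfl⟩, hq0⟩
    refine ⟨⟨p + q, (MvPolynomial.totalDegree_add _ _).trans (max_le hp hq), ?_⟩, ?_⟩
    · ext x; simp
    · simp only [Pi.add_apply]
      rw [integral_add (integrableOn_eval_convexHull v p) (integrableOn_eval_convexHull v q), hp0,
        hq0, add_zero]
  zero_mem' := ⟨⟨0, by simp, by ext x; simp⟩, by simp⟩
  smul_mem' := by
    rintro c _ ⟨⟨p, hp, rfl⟩, hp0⟩
    refine ⟨⟨c • p, (MvPolynomial.totalDegree_smul_le _ _).trans hp, ?_⟩, ?_⟩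
    · ext x; simp
    · simp only [Pi.smul_apply]
      rw [integral_smul, hp0, smul_zero]

theorem volume_real_convexHull_ne_zero (b : AffineBasis (Fin (n + 1)) ℝ (Fin n → ℝ)) :
    volume.real (convexHull ℝ (Set.range b)) ≠ 0 := by
  have hpos : 0 < volume (convexHull ℝ (Set.range b)) :=
    Measure.measure_pos_of_nonempty_interior _
      (interior_convexHull_nonempty_iff_affineSpan_eq_top.2 b.tot)
  exact (ENNReal.toReal_pos hpos.ne' (isCompact_convexHull_range b).measure_lt_top.ne).ne'

theorem meanZeroPolynomials_eq_span (b : AffineBasis (Fin (n + 1)) ℝ (Fin n → ℝ)) (k : ℕ) :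
    meanZeroPolynomials b k = Submodule.span ℝ {g | ∃ α β : Fin (n + 1) → ℕ,
      (∑ i, α i = k) ∧ (∑ i, β i = k) ∧ (∑ i, ((α i : ℤ) - (β i : ℤ)).natAbs = 2) ∧
      g = scaledMonomial b α - scaledMonomial b β} := by
  set W := Submodule.span ℝ {g | ∃ α β : Fin (n + 1) → ℕ,
    (∑ i, α i = k) ∧ (∑ i, β i = k) ∧ (∑ i, ((α i : ℤ) - (β i : ℤ)).natAbs = 2) ∧
    g = scaledMonomial b α - scaledMonomial b β} with hW
  have hint : ∀ α, IntegrableOn (scaledMonomial b α) (convexHull ℝ (Set.range b)) := fun α =>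
    (continuous_scaledMonomial b α).continuousOn.integrableOn_compact (isCompact_convexHull_range b)
  have hWle : W ≤ meanZeroPolynomials b k := by
    rw [hW, Submodule.span_le]
    rintro _ ⟨α, β, hα, hβ, -, rfl⟩
    obtain ⟨p, hp, hpe⟩ := exists_eval_eq_scaledMonomial b α
    obtain ⟨q, hq, hqe⟩ := exists_eval_eq_scaledMonomial b β
    refine ⟨⟨p - q, (MvPolynomial.totalDegree_sub _ _).trans
      (max_le (hp.trans hα.le) (hq.trans hβ.le)), ?_⟩, ?_⟩
    · ext x; simp [hpe, hqe]
    · have := sub_mem_of_step (⊥ : Submodule ℝ ℝ) k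
        (fun α => ∫ x in convexHull ℝ (Set.range b), scaledMonomial b α x)
        (fun γ i j _ _ => sub_eq_zero.2 (setIntegral_scaledMonomial_add_single volume b γ i j))
        hα hβ
      simp only [Pi.sub_apply]
      rw [integral_sub (hint α) (hint β)]
      exact this
  refine le_antisymm ?_ hWle
  set α₀ : Fin (n + 1) → ℕ := Pi.single 0 k
  have hred : ∀ α, ∑ l, α l = k → scaledMonomial b α - scaledMonomial b α₀ ∈ W := fun α hα =>
    sub_mem_of_step W k (scaledMonomial b)
      (fun γ i j hij hγ => Submodule.subset_span ⟨_, _, by simp [Finset.sum_add_distrib, hγ],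
        by simp [Finset.sum_add_distrib, hγ], sum_natAbs_add_single_sub_add_single γ hij, rfl⟩)
      hα (by simp [α₀])
  have hintegral : ∀ (q : MvPolynomial (Fin n) ℝ) (c : ℝ),
      (fun x => MvPolynomial.eval x q) - c • scaledMonomial b α₀ ∈ W →
      ∫ x in convexHull ℝ (Set.range b), MvPolynomial.eval x q =
        c * ∫ x in convexHull ℝ (Set.range b), scaledMonomial b α₀ x := by
    intro q c h
    have h0 := (hWle h).2
    simp only [Pi.sub_apply, Pi.smul_apply, smul_eq_mul] at h0
    rw [integral_sub (integrableOn_eval_convexHull b q) ((hint α₀).const_mul c),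
      integral_const_mul] at h0
    linarith
  have hI : ∫ x in convexHull ℝ (Set.range b), scaledMonomial b α₀ x ≠ 0 := by
    intro hI
    obtain ⟨c, hc⟩ := exists_sub_smul_scaledMonomial_mem b hred (q := 1) (by simp)
    have := hintegral 1 c hc
    rw [hI, mul_zero] at this
    simp only [map_one, setIntegral_const, smul_eq_mul, mul_one] at this
    exact volume_real_convexHull_ne_zero b this
  rintro _ ⟨⟨q, hq, rfl⟩, hq0⟩
  obtain ⟨c, hc⟩ := exists_sub_smul_scaledMonomial_mem b hred hq
  have hc0 := hintegral q c hc
  rw [hq0, eq_comm, mul_eq_zero, or_iff_left hI] at hc0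
  simpa [hc0] using hc

end Simplex

/-- the space of polynomial functions of total degree at most `k` on `ℝⁿ`
with vanishing Lebesgue integral over the simplex `T = conv{v₀,…,v_n}` equals the span of
the differences `λ^α/α! − λ^β/β!` over pairs of lattice nodes `α, β ∈ 𝕋ⁿ_k` at
distance one. -/
theorem polynomial_meanzero_eq_span_differences
    (n k : ℕ) (hn : 1 ≤ n)
    (v : Fin (n + 1) → (Fin n → ℝ)) (hv : AffineIndependent ℝ v)
    (lam : Fin (n + 1) → ((Fin n → ℝ) →ᵃ[ℝ] ℝ))
    (hlam : ∀ i j, lam i (v j) = if i = j then 1 else 0)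
    (hsum : ∀ x : Fin n → ℝ, ∑ i, lam i x = 1) :
    {p : (Fin n → ℝ) → ℝ |
        (∃ q : MvPolynomial (Fin n) ℝ, q.totalDegree ≤ k ∧
          p = fun x => MvPolynomial.eval x q) ∧
        (∫ x in convexHull ℝ (Set.range v), p x) = 0}
      = ↑(Submodule.span ℝ
          {g : (Fin n → ℝ) → ℝ | ∃ α β : Fin (n + 1) → ℕ,
            (∑ i, α i = k) ∧ (∑ i, β i = k) ∧
            (∑ i, ((α i : ℤ) - (β i : ℤ)).natAbs = 2) ∧
            g = fun x => (∏ ℓ, (lam ℓ x) ^ (α ℓ)) / (∏ ℓ, (Nat.factorial (α ℓ) : ℝ))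
                  - (∏ ℓ, (lam ℓ x) ^ (β ℓ)) / (∏ ℓ, (Nat.factorial (β ℓ) : ℝ))}) := by
  have htop : affineSpan ℝ (Set.range v) = ⊤ :=
    hv.affineSpan_eq_top_iff_card_eq_finrank_add_one.2 (by simp)
  let b : AffineBasis (Fin (n + 1)) ℝ (Fin n → ℝ) := ⟨v, hv, htop⟩
  have hcoord : ∀ i, lam i = b.coord i := fun i => b.eq_coord_of_apply i (hlam i)
  have hmono : ∀ α : Fin (n + 1) → ℕ, (fun x => (∏ ℓ, (lam ℓ x) ^ (α ℓ)) /
      (∏ ℓ, (Nat.factorial (α ℓ) : ℝ))) = scaledMonomial b α := fun α => by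
    ext x
    simp only [scaledMonomial, Finset.prod_div_distrib, hcoord]
  have h := congrArg (SetLike.coe) (meanZeroPolynomials_eq_span b k)
  simp only [← hmono] at h
  exact h
end

section
/- Let n ≥ 2, k ≥ 0, 1 ≤ ℓ ≤ n−1, and let r, r' be nonnegative integers with r' ≥ 2r. For every subset f of {0,…,n} with |f| = ℓ+1 define the set M(f) = D(f,r) \ ⋃_{e ⊂ f, |e| = ℓ} D(e,r'). Then for any two distinct subsets f, f̃ of {0,…,n} with |f| = |f̃| = ℓ+1, the sets M(f) and M(f̃) are disjoint. -/
open scoped BigOperators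

/-- The lattice tube `D(f, s)` inside the simplicial lattice `𝕋ⁿ_k`: lattice nodes whose
distance `∑_{i ∉ f} α_i` to the sub-simplex `f` is at most `s`. -/
def latticeTube (n k : ℕ) (f : Finset (Fin (n + 1))) (s : ℕ) : Set (Fin (n + 1) → ℕ) :=
  {α | ∑ i, α i = k ∧ ∑ i ∈ fᶜ, α i ≤ s}

/-- for `r' ≥ 2r`, the sets
`D(f,r) \ ⋃_{e ⊂ f, |e| = ℓ} D(e,r')`, over `ℓ`-dimensional sub-simplices `f`
(subsets of cardinality `ℓ+1`), are pairwise disjoint. -/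
theorem lattice_tube_difference_disjoint
    (n k : ℕ) (hn : 2 ≤ n) (l r r' : ℕ)
    (hl1 : 1 ≤ l) (hl2 : l ≤ n - 1) (hr : 2 * r ≤ r')
    (f ftl : Finset (Fin (n + 1)))
    (hf : f.card = l + 1) (hftl : ftl.card = l + 1) (hne : f ≠ ftl) :
    Disjoint
      (latticeTube n k f r \
        ⋃ e ∈ {e : Finset (Fin (n + 1)) | e ⊆ f ∧ e.card = l}, latticeTube n k e r')
      (latticeTube n k ftl r \
        ⋃ e ∈ {e : Finset (Fin (n + 1)) | e ⊆ ftl ∧ e.card = l}, latticeTube n k e r') := by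
  obtain ⟨j, hjf, hjftl⟩ : ∃ j ∈ f, j ∉ ftl := by
    by_contra! h
    exact hne (Finset.eq_of_subset_of_card_le h (by omega))
  rw [Set.disjoint_left]
  rintro α ⟨⟨hsum, hαf⟩, hα⟩ ⟨⟨-, hαftl⟩, -⟩
  refine hα (Set.mem_biUnion (x := f.erase j) ⟨f.erase_subset j, ?_⟩ ⟨hsum, ?_⟩)
  · rw [Finset.card_erase_of_mem hjf, hf, Nat.add_sub_cancel]
  · have hj : α j ≤ ∑ i ∈ ftlᶜ, α i :=
      Finset.single_le_sum (fun i _ => Nat.zero_le (α i)) (Finset.mem_compl.2 hjftl)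
    rw [Finset.compl_erase, Finset.sum_insert (by simpa using hjf)]
    omega
end

section
/- Let n ≥ 2 and m ≥ 0 be integers, and let r₀, r₁, …, r_n be nonnegative integers with r_n = 0, r_{n−1} = m and r_ℓ ≥ 2·r_{ℓ+1} for ℓ = n−2, …, 0. Let k ≥ 2r₀ + 1. Then for every ℓ with 1 ≤ ℓ ≤ n−1 and every subset f of {0,…,n} with |f| = ℓ+1, one has the equality of subsets of 𝕋ⁿ_k: D(f, r_ℓ) \ ⋃_{i=0}^{ℓ−1} ⋃_{e ⊆ f, |e| = i+1} D(e, r_i) = D(f, r_ℓ) \ ⋃_{i=0}^{ℓ−1} ⋃_{e ⊆ {0,…,n}, |e| = i+1} D(e, r_i). -/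
open scoped BigOperators

/-- The distance to an intersection of sub-simplices is at most the sum of the distances. -/
theorem latticeTube_inter_subset {n k : ℕ} {e f : Finset (Fin (n + 1))} {s t : ℕ} :
    latticeTube n k e s ∩ latticeTube n k f t ⊆ latticeTube n k (e ∩ f) (s + t) := by
  rintro α ⟨⟨hα, he⟩, -, hf⟩
  refine ⟨hα, ?_⟩
  have h := Finset.sum_union_inter (s₁ := eᶜ) (s₂ := fᶜ) (f := α)
  rw [Finset.compl_inter]
  omega

theorem latticeTube_mono {n k : ℕ} {f : Finset (Fin (n + 1))} {s t : ℕ} (h : s ≤ t) :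
    latticeTube n k f s ⊆ latticeTube n k f t :=
  fun _ hα => ⟨hα.1, hα.2.trans h⟩

theorem latticeTube_empty_eq_empty {n k s : ℕ} (h : s < k) : latticeTube n k ∅ s = ∅ := by
  ext α
  simp only [latticeTube, Finset.compl_empty, Set.mem_ofPred_eq, Set.mem_empty_iff_false,
    iff_false]
  omega

/-- A sequence that at least halves at each step up to `N` is antitone up to `N`. -/
theorem le_of_two_mul_succ_le {N : ℕ} {r : ℕ → ℕ} (hr : ∀ i < N, 2 * r (i + 1) ≤ r i)
    {i j : ℕ} (hij : i ≤ j) (hj : j ≤ N) : r j ≤ r i := by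
  induction j, hij using Nat.le_induction with
  | base => rfl
  | succ j _ ih =>
    have := hr j (by omega)
    have := ih (by omega)
    omega

/-- under the smoothness conditions `r_n = 0`, `r_{n−1} = m`,
`r_ℓ ≥ 2 r_{ℓ+1}` and `k ≥ 2r₀ + 1`, removing the tubes `D(e, r_i)` of the sub-simplices
`e` of `f` from `D(f, r_ℓ)` is the same as removing the tubes of all `i`-dimensional
sub-simplices of the full simplex, `i = 0, …, ℓ−1`. -/
theorem lattice_tube_removal_local_eq_global
    (n : ℕ) (hn : 2 ≤ n) (m : ℕ) (r : ℕ → ℕ)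
    (hrn : r n = 0) (hrn1 : r (n - 1) = m)
    (hrdec : ∀ l, l ≤ n - 2 → 2 * r (l + 1) ≤ r l)
    (k : ℕ) (hk : 2 * r 0 + 1 ≤ k)
    (l : ℕ) (hl1 : 1 ≤ l) (hl2 : l ≤ n - 1)
    (f : Finset (Fin (n + 1))) (hf : f.card = l + 1) :
    latticeTube n k f (r l) \
        ⋃ i < l, ⋃ e ∈ {e : Finset (Fin (n + 1)) | e ⊆ f ∧ e.card = i + 1},
          latticeTube n k e (r i)
      = latticeTube n k f (r l) \
        ⋃ i < l, ⋃ e ∈ {e : Finset (Fin (n + 1)) | e.card = i + 1},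
          latticeTube n k e (r i) := by
  have hr : ∀ i < n - 1, 2 * r (i + 1) ≤ r i := fun i hi => hrdec i (by omega)
  apply Set.Subset.antisymm
  · rintro α ⟨hα, hloc⟩
    refine ⟨hα, fun hglob => hloc ?_⟩
    simp only [Set.mem_iUnion, Set.mem_ofPred_eq, exists_prop] at hglob ⊢
    obtain ⟨i, hil, e, he, hαe⟩ := hglob
    by_cases hef : e ⊆ f
    · exact ⟨i, hil, e, ⟨hef, he⟩, hαe⟩
    have hinter := latticeTube_inter_subset ⟨hαe, hα⟩
    have hlt : (e ∩ f).card < e.card :=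
      Finset.card_lt_card (Finset.inter_subset_left.ssubset_of_ne
        fun h => hef (Finset.inter_eq_left.mp h))
    have hli : r l ≤ r i := le_of_two_mul_succ_le hr hil.le hl2
    rcases Nat.eq_zero_or_pos (e ∩ f).card with h0 | hpos
    · have hi0 : r i ≤ r 0 := le_of_two_mul_succ_le hr (Nat.zero_le i) (by omega)
      rw [Finset.card_eq_zero.mp h0, latticeTube_empty_eq_empty (by omega)] at hinter
      exact hinter.elim
    · have hdouble : 2 * r i ≤ r (i - 1) := by
        simpa [Nat.sub_add_cancel (show 1 ≤ i by omega)] using hr (i - 1) (by omega)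
      have hmono : r (i - 1) ≤ r ((e ∩ f).card - 1) :=
        le_of_two_mul_succ_le hr (by omega) (by omega)
      exact ⟨(e ∩ f).card - 1, by omega, e ∩ f, ⟨Finset.inter_subset_right, by omega⟩,
        latticeTube_mono (by omega) hinter⟩
  · refine Set.sdiff_subset_sdiff_right ?_
    exact Set.iUnion₂_mono fun i _ => Set.biUnion_subset_biUnion_left fun e he => he.2
end

section
/- Let k ≥ 0. If u = (u₁, u₂, u₃) is a triple of real polynomials in three variables of total degree at most k satisfying ∂₁u₁ + ∂₂u₂ + ∂₃u₃ = 0, then there exists a triple w = (w₁, w₂, w₃) of real polynomials of total degree at most k+1 with u = curl w. That is, in the polynomial de Rham complex, 𝒫_k(ℝ³;ℝ³) ∩ ker(div) = curl 𝒫_{k+1}(ℝ³;ℝ³). -/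
open scoped BigOperators

namespace MvPolynomial

theorem pderiv_homogeneousComponent_succ {σ R : Type*} [CommSemiring R] (i : σ) (n : ℕ)
    (p : MvPolynomial σ R) :
    pderiv i (homogeneousComponent (n + 1) p) = homogeneousComponent n (pderiv i p) := by
  ext m
  simp only [coeff_pderiv, coeff_homogeneousComponent, map_add, Finsupp.degree_single,
    add_left_inj]
  split_ifs <;> simp

theorem sum_pderiv_homogeneousComponent_eq_zero {σ R : Type*} [Fintype σ] [CommSemiring R]
    {u : σ → MvPolynomial σ R} (hdiv : ∑ i, pderiv i (u i) = 0) (n : ℕ) :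
    ∑ i, pderiv i (homogeneousComponent n (u i)) = 0 := by
  cases n with
  | zero => simp [homogeneousComponent_zero]
  | succ n => simp_rw [pderiv_homogeneousComponent_succ, ← map_sum, hdiv, map_zero]

/-- The operator dividing the homogeneous component of degree `n ≤ k` by `n + 2`; on polynomials
of degree at most `k` it inverts `∑ j, X j * pderiv j + 2`. -/
noncomputable def eulerInverse {σ : Type*} (k : ℕ) (p : MvPolynomial σ ℝ) : MvPolynomial σ ℝ :=
  ∑ n ∈ Finset.range (k + 1), C ((n + 2 : ℝ)⁻¹) * homogeneousComponent n p

theorem totalDegree_eulerInverse_le {σ : Type*} (k : ℕ) (p : MvPolynomial σ ℝ) :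
    (eulerInverse k p).totalDegree ≤ k := by
  refine totalDegree_finsetSum_le fun n hn => ?_
  rw [← smul_eq_C_mul]
  exact (totalDegree_smul_le _ _).trans
    ((homogeneousComponent_isHomogeneous n p).totalDegree_le.trans
      (Nat.lt_succ_iff.mp (Finset.mem_range.mp hn)))

theorem sum_X_mul_pderiv_eulerInverse {σ : Type*} [Fintype σ] {k : ℕ} {p : MvPolynomial σ ℝ}
    (hp : p.totalDegree ≤ k) :
    ∑ j, X j * pderiv j (eulerInverse k p) + 2 * eulerInverse k p = p := by
  have euler (n : ℕ) := (homogeneousComponent_isHomogeneous n p).sum_X_mul_pderiv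
  have hsum : ∑ n ∈ Finset.range (k + 1), homogeneousComponent n p = p := by
    conv_rhs => rw [← sum_homogeneousComponent p]
    refine (Finset.sum_subset (Finset.range_subset_range.mpr (by lia)) fun n _ hn => ?_).symm
    exact homogeneousComponent_eq_zero _ _ (by simpa using hn)
  simp only [eulerInverse, map_sum, pderiv_C_mul, Finset.mul_sum]
  rw [Finset.sum_comm, ← Finset.sum_add_distrib]
  conv_rhs => rw [← hsum]
  refine Finset.sum_congr rfl fun n _ => ?_
  simp_rw [mul_left_comm (X _), ← Finset.mul_sum, euler]
  have hC : (C ((n + 2 : ℝ)⁻¹) : MvPolynomial σ ℝ) * (n + 2) = 1 := by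
    have h : (n + 2 : MvPolynomial σ ℝ) = C (n + 2 : ℝ) := by simp [map_ofNat C 2]
    rw [h, ← C_mul, inv_mul_cancel₀ (by positivity), C_1]
  rw [nsmul_eq_mul]
  linear_combination homogeneousComponent n p * hC

theorem sum_pderiv_eulerInverse_eq_zero {σ : Type*} [Fintype σ] {u : σ → MvPolynomial σ ℝ}
    (hdiv : ∑ i, pderiv i (u i) = 0) (k : ℕ) :
    ∑ i, pderiv i (eulerInverse k (u i)) = 0 := by
  simp only [eulerInverse, map_sum, pderiv_C_mul]
  rw [Finset.sum_comm]
  simp_rw [← Finset.mul_sum, sum_pderiv_homogeneousComponent_eq_zero hdiv, mul_zero,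
    Finset.sum_const_zero]

theorem totalDegree_mul_X_sub_mul_X_le {σ R : Type*} [CommRing R] {k : ℕ}
    {p q : MvPolynomial σ R} (hp : p.totalDegree ≤ k) (hq : q.totalDegree ≤ k) (i j : σ) :
    (p * X i - q * X j).totalDegree ≤ k + 1 := by
  have h {r : MvPolynomial σ R} (hr : r.totalDegree ≤ k) (l : σ) :
      (r * X l).totalDegree ≤ k + 1 :=
    (totalDegree_mul _ _).trans (add_le_add hr ((totalDegree_monomial_le _ _).trans (by simp)))
  exact (totalDegree_sub _ _).trans (max_le (h hp i) (h hq j))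

end MvPolynomial


/-- a divergence-free polynomial vector field of degree at most `k` is the
curl of a polynomial vector field of degree at most `k+1`:
`𝒫_k(ℝ³;ℝ³) ∩ ker(div) = curl 𝒫_{k+1}(ℝ³;ℝ³)`. -/
theorem divfree_polynomial_is_curl
    (k : ℕ) (u : Fin 3 → MvPolynomial (Fin 3) ℝ)
    (hdeg : ∀ i, (u i).totalDegree ≤ k)
    (hdiv : ∑ i, MvPolynomial.pderiv i (u i) = 0) :
    ∃ w : Fin 3 → MvPolynomial (Fin 3) ℝ,
      (∀ i, (w i).totalDegree ≤ k + 1) ∧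
      u 0 = MvPolynomial.pderiv 1 (w 2) - MvPolynomial.pderiv 2 (w 1) ∧
      u 1 = MvPolynomial.pderiv 2 (w 0) - MvPolynomial.pderiv 0 (w 2) ∧
      u 2 = MvPolynomial.pderiv 0 (w 1) - MvPolynomial.pderiv 1 (w 0) := by
  have hv (i : Fin 3) := MvPolynomial.sum_X_mul_pderiv_eulerInverse (hdeg i)
  have hd := MvPolynomial.sum_pderiv_eulerInverse_eq_zero hdiv k
  have hk (i : Fin 3) := MvPolynomial.totalDegree_eulerInverse_le k (u i)
  generalize hV : (fun i => MvPolynomial.eulerInverse k (u i)) = v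
  simp only [funext_iff] at hV
  simp only [hV, Fin.sum_univ_three] at hv hd hk
  -- The potential is the cross product of `v` with the position vector.
  refine ⟨![v 1 * .X 2 - v 2 * .X 1, v 2 * .X 0 - v 0 * .X 2, v 0 * .X 1 - v 1 * .X 0], ?_, ?_⟩
  · intro i
    fin_cases i <;> exact MvPolynomial.totalDegree_mul_X_sub_mul_X_le (hk _) (hk _) _ _
  · simp only [Matrix.cons_val, map_sub, MvPolynomial.pderiv_mul, MvPolynomial.pderiv_X,
      Pi.single_apply, Fin.reduceEq, if_true, if_false]
    refine ⟨?_, ?_, ?_⟩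
    · linear_combination -hv 0 + .X 0 * hd
    · linear_combination -hv 1 + .X 1 * hd
    · linear_combination -hv 2 + .X 2 * hd
end

section
/- Let T ⊂ ℝ³ be a tetrahedron with affinely independent vertices v₀, v₁, v₂, v₃. Let r₂ = (r^v, r^e, r^f) be integers with r^f ≥ 0, r^e ≥ 2r^f + 1, r^v ≥ 2r^e, and let k ≥ 2r^v + 1; set r₃ = (r^v−1, r^e−1, r^f−1). Assume S₃(T, r₃, k−1) is nonempty. Then {div u : u = (u₁,u₂,u₃) with each component u_i ∈ B_k(T; r₂)} = {p ∈ B_{k−1}(T; r₃) : ∫_T p dx = 0}. That is, div 𝔹_k³(T; r₂) = 𝔹_{k−1}(T; r₃)/ℝ. -/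
open scoped BigOperators
open MeasureTheory

/-- The interior lattice set `S₃(T, r, k)` for a smoothness vector `r = (rᵛ, rᵉ, r^f)`:
lattice nodes of `𝕋³_k` whose distance to every sub-simplex exceeds the corresponding
smoothness parameter (vertices: `rᵛ`, edges: `rᵉ`, faces: `r^f`). -/
def interiorLattice (k : ℕ) (rv re rf : ℤ) : Set (Fin 4 → ℕ) :=
  {α | ∑ i, α i = k ∧ ∀ f : Finset (Fin 4), f.Nonempty → f ≠ Finset.univ →
    ((f.card = 1 → rv < ∑ i ∈ fᶜ, (α i : ℤ)) ∧
     (f.card = 2 → re < ∑ i ∈ fᶜ, (α i : ℤ)) ∧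
     (f.card = 3 → rf < ∑ i ∈ fᶜ, (α i : ℤ)))}

/-- The Bernstein monomial `λ^α` on `ℝ³`. -/
def bernBary3 (lam : Fin 4 → ((Fin 3 → ℝ) →ᵃ[ℝ] ℝ)) (α : Fin 4 → ℕ) :
    (Fin 3 → ℝ) → ℝ :=
  fun x => ∏ i, (lam i x) ^ (α i)

/-- The bubble space `B_k(T; r) = span{λ^α : α ∈ S₃(T, r, k)}`. -/
def bubbleSpace (lam : Fin 4 → ((Fin 3 → ℝ) →ᵃ[ℝ] ℝ)) (k : ℕ) (rv re rf : ℤ) :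
    Submodule ℝ ((Fin 3 → ℝ) → ℝ) :=
  Submodule.span ℝ (bernBary3 lam '' interiorLattice k rv re rf)

/-- The divergence `div u = ∂₁u₁ + ∂₂u₂ + ∂₃u₃` of a vector field on `ℝ³`. -/
noncomputable def diverg (u : (Fin 3 → ℝ) → (Fin 3 → ℝ)) : (Fin 3 → ℝ) → ℝ :=
  fun x => ∑ m, fderiv ℝ (fun y => u y m) x (Pi.single m 1)

/-- Membership in the interior lattice, in terms of single entries and pairs of entries. -/
theorem mem_interiorLattice_iff {k : ℕ} {rv re rf : ℤ} {α : Fin 4 → ℕ} :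
    α ∈ interiorLattice k rv re rf ↔ ∑ i, α i = k ∧ (∀ i, rf < α i) ∧
      (∀ i j, i ≠ j → re < (α i : ℤ) + α j) ∧ ∀ i, rv < (k : ℤ) - α i := by
  have hcompl (h : ∑ i, α i = k) (i : Fin 4) :
      ∑ j ∈ ({i} : Finset (Fin 4))ᶜ, (α j : ℤ) = k - α i := by
    have := Finset.sum_compl_add_sum ({i} : Finset (Fin 4)) (fun j => (α j : ℤ))
    rw [Finset.sum_singleton, ← Nat.cast_sum Finset.univ, h] at this
    linarith
  constructor
  · rintro ⟨hk, h⟩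
    refine ⟨hk, fun i => ?_, fun i j hij => ?_, fun i => ?_⟩
    · simpa using (h {i}ᶜ (by rw [← Finset.card_pos]; simp [Finset.card_compl])
        (by simp)).2.2 (by simp [Finset.card_compl])
    · have hc : ({i, j}ᶜ : Finset (Fin 4)).card = 2 := by
        rw [Finset.card_compl, Finset.card_pair hij, Fintype.card_fin]
      have := (h {i, j}ᶜ (Finset.card_pos.1 (by omega)) (fun h => by simp [h] at hc)).2.1 hc
      rwa [compl_compl, Finset.sum_pair hij] at this
    · have := (h {i} (by simp) (fun h => by simpa using congrArg Finset.card h)).1 (by simp)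
      rwa [hcompl hk] at this
  · rintro ⟨hk, h1, h2, h3⟩
    refine ⟨hk, fun f _ _ => ⟨fun hf => ?_, fun hf => ?_, fun hf => ?_⟩⟩
    · obtain ⟨i, rfl⟩ := Finset.card_eq_one.1 hf
      rw [hcompl hk]
      exact h3 i
    · obtain ⟨i, j, hij, he⟩ := Finset.card_eq_two.1
        (show fᶜ.card = 2 by simp [Finset.card_compl, hf])
      rw [he, Finset.sum_pair hij]
      exact h2 i j hij
    · obtain ⟨i, he⟩ := Finset.card_eq_one.1 (show fᶜ.card = 1 by simp [Finset.card_compl, hf])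
      rw [he, Finset.sum_singleton]
      exact h1 i

/-- Moving one unit from a larger entry to a smaller one stays in the interior lattice. -/
theorem interiorLattice_transfer {k : ℕ} {rv re rf : ℤ} {α : Fin 4 → ℕ}
    (hα : α ∈ interiorLattice k rv re rf) {i j : Fin 4} (hij : α j < α i) :
    α - Pi.single i 1 + Pi.single j 1 ∈ interiorLattice k rv re rf := by
  rw [mem_interiorLattice_iff] at hα ⊢
  obtain ⟨h0, h1, h2, h3⟩ := hα
  have hne : i ≠ j := by rintro rfl; exact lt_irrefl _ hij
  have hval (l : Fin 4) : (α - Pi.single i 1 + Pi.single j 1 : Fin 4 → ℕ) l =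
      if l = i then α i - 1 else if l = j then α j + 1 else α l := by
    by_cases hi : l = i
    · subst hi; simp [hne]
    · by_cases hj : l = j
      · subst hj; simp [hi]
      · simp [hi, hj]
  refine ⟨?_, fun l => ?_, fun l m hlm => ?_, fun l => ?_⟩
  · simp only [hval]
    rw [Fin.sum_univ_four] at h0 ⊢
    revert hij hne
    fin_cases i <;> fin_cases j <;> simp <;> omega
  · rw [hval]
    have := h1 l
    have := h1 i
    have := h1 j
    grind
  · rw [hval, hval]
    have := h2 l m hlm
    have := h2 i
    have := h2 j
    grind
  · rw [hval]
    have := h3 l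
    have := h3 i
    grind

/-- Lowering one entry of a node of `S(r, k)` gives a node of `S(r - 1, k - 1)`. -/
theorem interiorLattice_lower {k : ℕ} {rv re rf : ℤ} (hrf : 0 ≤ rf) {α : Fin 4 → ℕ}
    (hα : α ∈ interiorLattice k rv re rf) (i : Fin 4) :
    α - Pi.single i 1 ∈ interiorLattice (k - 1) (rv - 1) (re - 1) (rf - 1) := by
  rw [mem_interiorLattice_iff] at hα ⊢
  obtain ⟨h0, h1, h2, h3⟩ := hα
  have hval (l : Fin 4) : (α - Pi.single i 1 : Fin 4 → ℕ) l =
      if l = i then α i - 1 else α l := by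
    by_cases hi : l = i
    · subst hi; simp
    · simp [hi]
  have hi := h1 i
  have hik : α i ≤ k := h0 ▸ Finset.single_le_sum (fun _ _ => Nat.zero_le _) (Finset.mem_univ i)
  refine ⟨?_, fun l => ?_, fun l m hlm => ?_, fun l => ?_⟩
  · simp only [hval]
    rw [Fin.sum_univ_four] at h0 ⊢
    clear h1 h2 h3 hval
    revert hi
    fin_cases i <;> simp <;> omega
  · rw [hval]
    have := h1 l
    grind
  · rw [hval, hval]
    have := h2 l m hlm
    grind
  · rw [hval]
    have := h3 l
    grind

/-- Raising a smallest entry of a node of `S(r - 1, k - 1)` gives a node of `S(r, k)`. -/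
theorem exists_add_single_mem_interiorLattice {k : ℕ} {rv re rf : ℤ} (hrf : 0 ≤ rf)
    (hre : 2 * rf + 1 ≤ re) (hrv : 2 * re ≤ rv) (hk : 2 * rv + 1 ≤ (k : ℤ)) {β : Fin 4 → ℕ}
    (hβ : β ∈ interiorLattice (k - 1) (rv - 1) (re - 1) (rf - 1)) :
    ∃ i, β + Pi.single i 1 ∈ interiorLattice k rv re rf := by
  obtain ⟨i, hi⟩ := Finite.exists_min β
  refine ⟨i, ?_⟩
  rw [mem_interiorLattice_iff] at hβ ⊢
  obtain ⟨h0, h1, h2, h3⟩ := hβ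
  have hval (l : Fin 4) : (β + Pi.single i 1 : Fin 4 → ℕ) l =
      if l = i then β i + 1 else β l := by
    by_cases hi : l = i
    · subst hi; simp
    · simp [hi]
  have hcast : ((k - 1 : ℕ) : ℤ) = k - 1 := by omega
  rw [hcast] at h3
  have htriple (l m : Fin 4) (hl : l ≠ i) (hm : m ≠ i) (hlm : l ≠ m) :
      rv ≤ (β i : ℤ) + β l + β m := by
    obtain ⟨n, hni, hnl, hnm, hn⟩ : ∃ n, n ≠ i ∧ n ≠ l ∧ n ≠ m ∧ Finset.univ = {i, l, m, n} := by
      clear * - hl hm hlm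
      decide +revert
    rw [hn, Finset.sum_insert (by simp [hl.symm, hm.symm, hni.symm]),
      Finset.sum_insert (by simp [hlm, hnl.symm]), Finset.sum_pair hnm.symm] at h0
    have := h3 n
    omega
  refine ⟨?_, fun l => ?_, fun l m hlm => ?_, fun l => ?_⟩
  · simp only [Pi.add_apply, Finset.sum_add_distrib, h0]
    simp
    omega
  · rw [hval]
    have := h1 l
    have := hi l
    have := h2 i l
    grind
  · rw [hval, hval]
    have := h2 l m hlm
    have := htriple l m
    have := hi l
    have := hi m
    grind
  · rw [hval]
    have := h3 l
    have := h3 i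
    have := hi 0
    have := hi 1
    have := hi 2
    have := hi 3
    rw [Fin.sum_univ_four] at h0
    grind

/-- The Bernstein monomial `λ^α / α!`, normalized so that differentiation lowers indices. -/
noncomputable def normBern (lam : Fin 4 → ((Fin 3 → ℝ) →ᵃ[ℝ] ℝ)) (α : Fin 4 → ℕ) :
    (Fin 3 → ℝ) → ℝ :=
  fun x => ∏ i, (lam i x) ^ α i / (α i).factorial

theorem bernBary3_eq_smul_normBern (lam : Fin 4 → ((Fin 3 → ℝ) →ᵃ[ℝ] ℝ)) (α : Fin 4 → ℕ) :
    bernBary3 lam α = (∏ i, ((α i).factorial : ℝ)) • normBern lam α := by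
  ext x
  simp only [bernBary3, normBern, Pi.smul_apply, smul_eq_mul, ← Finset.prod_mul_distrib]
  refine Finset.prod_congr rfl fun i _ => ?_
  field_simp

theorem normBern_mem_bubbleSpace {lam : Fin 4 → ((Fin 3 → ℝ) →ᵃ[ℝ] ℝ)} {k : ℕ} {rv re rf : ℤ}
    {α : Fin 4 → ℕ} (hα : α ∈ interiorLattice k rv re rf) :
    normBern lam α ∈ bubbleSpace lam k rv re rf := by
  have hne : (∏ i, ((α i).factorial : ℝ)) ≠ 0 :=
    Finset.prod_ne_zero_iff.2 fun i _ => Nat.cast_ne_zero.2 (Nat.factorial_ne_zero _)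
  rw [← Submodule.smul_mem_iff _ hne, ← bernBary3_eq_smul_normBern]
  exact Submodule.subset_span ⟨α, hα, rfl⟩

theorem hasFDerivAt_affineMap (f : (Fin 3 → ℝ) →ᵃ[ℝ] ℝ) (x : Fin 3 → ℝ) :
    HasFDerivAt f (LinearMap.toContinuousLinearMap f.linear) x :=
  ContinuousAffineMap.hasFDerivAt ⟨f, f.continuous_of_finiteDimensional⟩

theorem contDiff_affineMap (f : (Fin 3 → ℝ) →ᵃ[ℝ] ℝ) {n : WithTop ℕ∞} : ContDiff ℝ n f :=
  ContinuousAffineMap.contDiff ⟨f, f.continuous_of_finiteDimensional⟩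

theorem contDiff_normBern (lam : Fin 4 → ((Fin 3 → ℝ) →ᵃ[ℝ] ℝ)) (α : Fin 4 → ℕ)
    {n : WithTop ℕ∞} : ContDiff ℝ n (normBern lam α) := by
  unfold normBern
  exact contDiff_prod fun i _ => ((contDiff_affineMap (lam i)).pow _).div_const _

theorem fderiv_normBern_apply (lam : Fin 4 → ((Fin 3 → ℝ) →ᵃ[ℝ] ℝ)) {α : Fin 4 → ℕ}
    (hα : ∀ i, 0 < α i) (x t : Fin 3 → ℝ) :
    fderiv ℝ (normBern lam α) x t =
      ∑ i, (lam i).linear t * normBern lam (α - Pi.single i 1) x := by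
  have h (i : Fin 4) := ((hasFDerivAt_affineMap (lam i) x).pow (α i)).mul_const
    ((α i).factorial : ℝ)⁻¹
  have hd := HasFDerivAt.finsetProd (u := Finset.univ) fun i _ => h i
  have he : normBern lam α = fun x => ∏ i, (lam i x) ^ α i * ((α i).factorial : ℝ)⁻¹ := rfl
  rw [he, hd.fderiv]
  simp only [_root_.sum_apply, _root_.smul_apply, smul_eq_mul, nsmul_eq_mul]
  refine Finset.sum_congr rfl fun i _ => ?_
  rw [normBern, ← Finset.mul_prod_erase _ _ (Finset.mem_univ i)]
  have hp : ∏ j ∈ Finset.univ.erase i, (lam j x) ^ ((α - Pi.single i 1 : Fin 4 → ℕ) j) /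
      (((α - Pi.single i 1 : Fin 4 → ℕ) j).factorial : ℝ) =
      ∏ j ∈ Finset.univ.erase i, (lam j x) ^ α j * ((α j).factorial : ℝ)⁻¹ := by
    refine Finset.prod_congr rfl fun j hj => ?_
    simp [Pi.single_eq_of_ne (Finset.ne_of_mem_erase hj), div_eq_mul_inv]
  rw [hp]
  obtain ⟨n, hn⟩ := Nat.exists_eq_succ_of_ne_zero (hα i).ne'
  simp only [Pi.sub_apply, Pi.single_eq_same, hn, Nat.succ_sub_one, Nat.factorial_succ,
    LinearMap.coe_toContinuousLinearMap']
  push_cast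
  field_simp

theorem linear_vertex_sub {v : Fin 4 → (Fin 3 → ℝ)} {lam : Fin 4 → ((Fin 3 → ℝ) →ᵃ[ℝ] ℝ)}
    (hlam : ∀ i j, lam i (v j) = if i = j then 1 else 0) (l i j : Fin 4) :
    (lam l).linear (v i - v j) = (if l = i then 1 else 0) - if l = j then 1 else 0 := by
  rw [← vsub_eq_sub, AffineMap.linearMap_vsub, hlam, hlam, vsub_eq_sub]

/-- Differentiation along an edge of the tetrahedron gives a difference of two monomials. -/
theorem fderiv_normBern_edge {v : Fin 4 → (Fin 3 → ℝ)} {lam : Fin 4 → ((Fin 3 → ℝ) →ᵃ[ℝ] ℝ)}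
    (hlam : ∀ i j, lam i (v j) = if i = j then 1 else 0) {α : Fin 4 → ℕ}
    (hα : ∀ i, 0 < α i) (i j : Fin 4) (x : Fin 3 → ℝ) :
    fderiv ℝ (normBern lam α) x (v i - v j) =
      (normBern lam (α - Pi.single i 1) - normBern lam (α - Pi.single j 1)) x := by
  simp [fderiv_normBern_apply lam hα, linear_vertex_sub hlam, sub_mul, Finset.sum_sub_distrib]

theorem sum_linear_eq_zero {lam : Fin 4 → ((Fin 3 → ℝ) →ᵃ[ℝ] ℝ)}
    (hsum : ∀ x : Fin 3 → ℝ, ∑ i, lam i x = 1) (t : Fin 3 → ℝ) :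
    ∑ i, (lam i).linear t = 0 := by
  have h (i : Fin 4) : (lam i).linear t = lam i t - lam i 0 := by
    rw [← vsub_eq_sub, ← AffineMap.linearMap_vsub, vsub_eq_sub, sub_zero]
  simp [h, Finset.sum_sub_distrib, hsum]

/-- The functions `lam` are the barycentric coordinates of an affine basis with points `v`. -/
theorem exists_affineBasis {v : Fin 4 → (Fin 3 → ℝ)} (hv : AffineIndependent ℝ v)
    {lam : Fin 4 → ((Fin 3 → ℝ) →ᵃ[ℝ] ℝ)}
    (hlam : ∀ i j, lam i (v j) = if i = j then 1 else 0) :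
    ∃ b : AffineBasis (Fin 4) ℝ (Fin 3 → ℝ), ⇑b = v ∧ ∀ i, b.coord i = lam i := by
  let b : AffineBasis (Fin 4) ℝ (Fin 3 → ℝ) :=
    ⟨v, hv, hv.affineSpan_eq_top_iff_card_eq_finrank_add_one.2 (by simp)⟩
  refine ⟨b, rfl, fun i => ?_⟩
  refine AffineMap.ext fun x => ?_
  have hb (j : Fin 4) : b j = v j := rfl
  have hw : ∑ j, b.coord j x = 1 := b.sum_coord_apply_eq_one x
  conv_rhs => rw [← b.affineCombination_coord_eq_self x]
  rw [Finset.map_affineCombination _ _ _ hw,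
    Finset.affineCombination_eq_linear_combination _ _ _ hw]
  simp [hb, hlam]

theorem convexHull_eq_nonneg {v : Fin 4 → (Fin 3 → ℝ)} (hv : AffineIndependent ℝ v)
    {lam : Fin 4 → ((Fin 3 → ℝ) →ᵃ[ℝ] ℝ)}
    (hlam : ∀ i j, lam i (v j) = if i = j then 1 else 0) :
    convexHull ℝ (Set.range v) = {x | ∀ i, 0 ≤ lam i x} := by
  obtain ⟨b, rfl, hb⟩ := exists_affineBasis hv hlam
  simp [b.convexHull_eq_nonneg_coord, hb]

theorem interior_convexHull_eq_pos {v : Fin 4 → (Fin 3 → ℝ)} (hv : AffineIndependent ℝ v)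
    {lam : Fin 4 → ((Fin 3 → ℝ) →ᵃ[ℝ] ℝ)}
    (hlam : ∀ i j, lam i (v j) = if i = j then 1 else 0) :
    interior (convexHull ℝ (Set.range v)) = {x | ∀ i, 0 < lam i x} := by
  obtain ⟨b, rfl, hb⟩ := exists_affineBasis hv hlam
  simp [b.interior_convexHull, hb]

theorem isCompact_tetrahedron (v : Fin 4 → (Fin 3 → ℝ)) :
    IsCompact (convexHull ℝ (Set.range v)) :=
  (Set.finite_range v).isCompact_convexHull (𝕜 := ℝ)

/-- Lipschitz regularity of the extension by zero of a bubble function. -/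
theorem exists_lipschitzWith_indicator_normBern {v : Fin 4 → (Fin 3 → ℝ)}
    (hv : AffineIndependent ℝ v) {lam : Fin 4 → ((Fin 3 → ℝ) →ᵃ[ℝ] ℝ)}
    (hlam : ∀ i j, lam i (v j) = if i = j then 1 else 0)
    (hsum : ∀ x : Fin 3 → ℝ, ∑ i, lam i x = 1) {α : Fin 4 → ℕ} (hα : ∀ i, 0 < α i) :
    ∃ C, LipschitzWith C ((convexHull ℝ (Set.range v)).indicator (normBern lam α)) := by
  let P : (Fin 4 → ℝ) → ℝ := fun y => ∏ i, y i ^ α i / (α i).factorial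
  have hP : ContDiff ℝ 1 P := contDiff_prod fun i _ => ((contDiff_apply ℝ ℝ i).pow _).div_const _
  obtain ⟨K, hK⟩ := hP.locallyLipschitz.locallyLipschitzOn.exists_lipschitzOnWith_of_compact
    (isCompact_Icc (a := (0 : Fin 4 → ℝ)) (b := 1))
  have hc (i : Fin 4) : ∃ C, LipschitzWith C fun x => max 0 (min 1 (lam i x)) := by
    refine ⟨_, LipschitzWith.const_max (LipschitzWith.const_min
      (Kf := ‖LinearMap.toContinuousLinearMap (lam i).linear‖₊) ?_ _) _⟩
    refine LipschitzWith.of_dist_le_mul fun x y => ?_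
    rw [dist_eq_norm, dist_eq_norm, ← vsub_eq_sub (lam i x), ← AffineMap.linearMap_vsub]
    exact (LinearMap.toContinuousLinearMap (lam i).linear).le_opNorm (x - y)
  choose C hC using hc
  have hclamp : LipschitzWith (Finset.univ.sup C) fun x i => max 0 (min 1 (lam i x)) :=
    LipschitzWith.of_dist_le_mul fun x y => by
      refine (dist_pi_le_iff (by positivity)).2 fun i => ((hC i).dist_le_mul x y).trans ?_
      gcongr
      exact Finset.le_sup (Finset.mem_univ i)
  refine ⟨K * Finset.univ.sup C, ?_⟩
  have hcomp := hK.comp (hclamp.lipschitzOnWith (s := Set.univ)) fun x _ =>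
    ⟨fun i => le_max_left _ _, fun i => max_le zero_le_one (min_le_left _ _)⟩
  rw [lipschitzOnWith_univ] at hcomp
  suffices h : (convexHull ℝ (Set.range v)).indicator (normBern lam α) =
      P ∘ fun x i => max 0 (min 1 (lam i x)) from h ▸ hcomp
  funext x
  rw [convexHull_eq_nonneg hv hlam]
  by_cases hx : x ∈ {x | ∀ i, 0 ≤ lam i x}
  · rw [Set.indicator_of_mem hx]
    refine Finset.prod_congr rfl fun i _ => ?_
    have h1 : lam i x ≤ 1 := hsum x ▸ Finset.single_le_sum (fun j _ => hx j) (Finset.mem_univ i)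
    simp [min_eq_right h1, max_eq_right (hx i)]
  · rw [Set.indicator_of_notMem hx]
    obtain ⟨i, hi⟩ := not_forall.1 hx
    rw [not_le] at hi
    refine (Finset.prod_eq_zero (Finset.mem_univ i) ?_).symm
    have : max 0 (min 1 (lam i x)) = 0 := max_eq_left ((min_le_right _ _).trans hi.le)
    simp [this, (hα i).ne']

/-- Directional derivatives of bubble functions have vanishing integral. -/
theorem setIntegral_fderiv_normBern_eq_zero {v : Fin 4 → (Fin 3 → ℝ)}
    (hv : AffineIndependent ℝ v) {lam : Fin 4 → ((Fin 3 → ℝ) →ᵃ[ℝ] ℝ)}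
    (hlam : ∀ i j, lam i (v j) = if i = j then 1 else 0)
    (hsum : ∀ x : Fin 3 → ℝ, ∑ i, lam i x = 1) {α : Fin 4 → ℕ} (hα : ∀ i, 0 < α i)
    (t : Fin 3 → ℝ) :
    ∫ x in convexHull ℝ (Set.range v), fderiv ℝ (normBern lam α) x t = 0 := by
  set T := convexHull ℝ (Set.range v)
  have hTc : IsCompact T := isCompact_tetrahedron v
  obtain ⟨C, hC⟩ := exists_lipschitzWith_indicator_normBern hv hlam hsum hα
  have hsupp : HasCompactSupport (T.indicator (normBern lam α)) :=
    HasCompactSupport.intro hTc fun x hx => Set.indicator_of_notMem hx _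
  have hconst (x s : Fin 3 → ℝ) (c : ℝ) : lineDeriv ℝ (fun _ => c) x s = 0 :=
    by simp [lineDeriv]
  have hint := (LipschitzWith.const (1 : ℝ)).integral_lineDeriv_mul_eq (μ := volume) hC hsupp (-t)
  simp only [neg_neg, mul_one, hconst, zero_mul, integral_zero] at hint
  rw [← integral_indicator hTc.measurableSet]
  refine Eq.trans ?_ hint.symm
  refine integral_congr_ae ?_
  have hfr : ∀ᵐ x, x ∉ frontier T :=
    measure_eq_zero_iff_ae_notMem.1 ((convex_convexHull ℝ _).addHaar_frontier volume)
  filter_upwards [hfr] with x hx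
  by_cases hxT : x ∈ T
  · have hnhds : T ∈ nhds x := by
      rw [← mem_interior_iff_mem_nhds]
      by_contra hxi
      exact hx ⟨subset_closure hxT, hxi⟩
    have heq : T.indicator (normBern lam α) =ᶠ[nhds x] normBern lam α := by
      filter_upwards [hnhds] with y hy using Set.indicator_of_mem hy _
    rw [Set.indicator_of_mem hxT, heq.lineDeriv_eq]
    exact (((contDiff_normBern lam α (n := 1)).differentiable
      one_ne_zero).differentiableAt.lineDeriv_eq_fderiv).symm
  · have heq : T.indicator (normBern lam α) =ᶠ[nhds x] fun _ => 0 := by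
      filter_upwards [hTc.isClosed.isOpen_compl.mem_nhds hxT] with y hy
        using Set.indicator_of_notMem hy _
    rw [Set.indicator_of_notMem hxT, heq.lineDeriv_eq, hconst]

theorem setIntegral_normBern_pos {v : Fin 4 → (Fin 3 → ℝ)}
    (hv : AffineIndependent ℝ v) {lam : Fin 4 → ((Fin 3 → ℝ) →ᵃ[ℝ] ℝ)}
    (hlam : ∀ i j, lam i (v j) = if i = j then 1 else 0) (α : Fin 4 → ℕ) :
    0 < ∫ x in convexHull ℝ (Set.range v), normBern lam α x := by
  have hTc := isCompact_tetrahedron v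
  have hint : IntegrableOn (normBern lam α) (convexHull ℝ (Set.range v)) :=
    (contDiff_normBern lam α (n := 0)).continuous.continuousOn.integrableOn_compact hTc
  rw [setIntegral_pos_iff_support_of_nonneg_ae _ hint]
  · have hne : (interior (convexHull ℝ (Set.range v))).Nonempty := by
      rw [interior_convexHull_nonempty_iff_affineSpan_eq_top,
        hv.affineSpan_eq_top_iff_card_eq_finrank_add_one]
      simp
    refine (isOpen_interior.measure_pos volume hne).trans_le (measure_mono fun x hx => ?_)
    refine ⟨?_, interior_subset hx⟩
    rw [interior_convexHull_eq_pos hv hlam] at hx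
    refine (Finset.prod_pos fun i _ => ?_).ne'
    have := hx i
    positivity
  · rw [Filter.EventuallyLE, ae_restrict_iff' hTc.measurableSet]
    refine ae_of_all _ fun x hx => ?_
    rw [convexHull_eq_nonneg hv hlam] at hx
    refine Finset.prod_nonneg fun i _ => ?_
    have := hx i
    positivity

/-- The span of differences of monomials whose indices are lowerings of a common node of
`S(r, k)`. -/
noncomputable def edgeSpan (lam : Fin 4 → ((Fin 3 → ℝ) →ᵃ[ℝ] ℝ)) (k : ℕ) (rv re rf : ℤ) :
    Submodule ℝ ((Fin 3 → ℝ) → ℝ) :=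
  Submodule.span ℝ {q | ∃ α ∈ interiorLattice k rv re rf, ∃ i j : Fin 4,
    q = normBern lam (α - Pi.single i 1) - normBern lam (α - Pi.single j 1)}

theorem interiorLattice_pos {k : ℕ} {rv re rf : ℤ} (hrf : 0 ≤ rf) {α : Fin 4 → ℕ}
    (hα : α ∈ interiorLattice k rv re rf) (i : Fin 4) : 0 < α i := by
  have := (mem_interiorLattice_iff.1 hα).2.1 i
  omega

/-- Directional derivatives map bubble functions to the span of edge differences. -/
theorem differentiable_and_fderiv_mem_edgeSpan {lam : Fin 4 → ((Fin 3 → ℝ) →ᵃ[ℝ] ℝ)}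
    (hsum : ∀ x : Fin 3 → ℝ, ∑ i, lam i x = 1) {k : ℕ} {rv re rf : ℤ} (hrf : 0 ≤ rf)
    {f : (Fin 3 → ℝ) → ℝ} (hf : f ∈ bubbleSpace lam k rv re rf) (t : Fin 3 → ℝ) :
    Differentiable ℝ f ∧ (fun x => fderiv ℝ f x t) ∈ edgeSpan lam k rv re rf := by
  induction hf using Submodule.span_induction with
  | mem f hf =>
    obtain ⟨α, hα, rfl⟩ := hf
    have hd : Differentiable ℝ (normBern lam α) :=
      (contDiff_normBern lam α (n := 1)).differentiable one_ne_zero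
    rw [bernBary3_eq_smul_normBern]
    refine ⟨hd.const_smul _, ?_⟩
    have heq : (fun x => fderiv ℝ ((∏ i, ((α i).factorial : ℝ)) • normBern lam α) x t) =
        (∏ i, ((α i).factorial : ℝ)) • ∑ i, (lam i).linear t •
          (normBern lam (α - Pi.single i 1) - normBern lam (α - Pi.single 0 1)) := by
      ext x
      rw [fderiv_const_smul hd.differentiableAt]
      simp only [_root_.smul_apply, fderiv_normBern_apply lam (interiorLattice_pos hrf hα),
        Pi.smul_apply, Finset.sum_apply, Pi.sub_apply, smul_eq_mul, mul_sub,
        Finset.sum_sub_distrib, ← Finset.sum_mul, sum_linear_eq_zero hsum t]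
      ring
    rw [heq]
    exact Submodule.smul_mem _ _ (Submodule.sum_mem _ fun i _ => Submodule.smul_mem _ _
      (Submodule.subset_span ⟨α, hα, i, 0, rfl⟩))
  | zero =>
    refine ⟨differentiable_const 0, ?_⟩
    simp only [fderiv_zero, Pi.zero_apply, _root_.zero_apply]
    exact Submodule.zero_mem _
  | add f g _ _ hf hg =>
    refine ⟨hf.1.add hg.1, ?_⟩
    have heq : (fun x => fderiv ℝ (f + g) x t) =
        (fun x => fderiv ℝ f x t) + fun x => fderiv ℝ g x t := by
      ext x
      rw [fderiv_add (hf.1 x) (hg.1 x)]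
      rfl
    rw [heq]
    exact Submodule.add_mem _ hf.2 hg.2
  | smul c f _ hf =>
    refine ⟨hf.1.const_smul c, ?_⟩
    have heq : (fun x => fderiv ℝ (c • f) x t) = c • fun x => fderiv ℝ f x t := by
      ext x
      rw [fderiv_const_smul (hf.1 x)]
      rfl
    rw [heq]
    exact Submodule.smul_mem _ _ hf.2

/-- The nodes of `S(r, k)` are connected by unit moves towards a balanced node. -/
theorem normBern_lower_sub_mem_edgeSpan (lam : Fin 4 → ((Fin 3 → ℝ) →ᵃ[ℝ] ℝ)) {k : ℕ}
    {rv re rf : ℤ} {c : Fin 4 → ℕ} (hcsum : ∑ i, c i = k) (hc : ∀ i j, c i ≤ c j + 1)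
    {α : Fin 4 → ℕ} (hα : α ∈ interiorLattice k rv re rf) (i : Fin 4) :
    normBern lam (α - Pi.single i 1) - normBern lam (c - Pi.single 0 1) ∈
      edgeSpan lam k rv re rf := by
  induction hn : ∑ i, (α i - c i) using Nat.strong_induction_on generalizing α i with
  | _ n ih =>
    have hαsum : ∑ i, α i = k := hα.1
    by_cases hle : ∀ l, α l ≤ c l
    · have : α = c := funext fun l =>
        (Finset.sum_eq_sum_iff_of_le fun l _ => hle l).1 (hαsum.trans hcsum.symm) l
          (Finset.mem_univ l)
      subst this
      exact Submodule.subset_span ⟨α, hα, i, 0, rfl⟩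
    · push Not at hle
      obtain ⟨a, ha⟩ := hle
      obtain ⟨b, hb⟩ : ∃ b, α b < c b := by
        by_contra! h
        exact (Finset.sum_lt_sum (fun l _ => h l) ⟨a, Finset.mem_univ a, ha⟩).ne
          (hcsum.trans hαsum.symm)
      have hab : α b < α a := by
        have := hc b a
        omega
      have hne : b ≠ a := by rintro rfl; exact lt_irrefl _ hab
      have hα' := interiorLattice_transfer hα hab
      have hlt : ∑ l, ((α - Pi.single a 1 + Pi.single b 1 : Fin 4 → ℕ) l - c l) < n := by
        rw [← hn]
        refine Finset.sum_lt_sum (fun l _ => ?_) ⟨a, Finset.mem_univ a, ?_⟩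
        · by_cases hl : l = b
          · subst hl
            simp [hne]
            omega
          · simp [hl]
            omega
        · simp [hne.symm]
          omega
      have h1 := ih _ hlt hα' b rfl
      have h2 : normBern lam (α - Pi.single i 1) - normBern lam (α - Pi.single a 1) ∈
          edgeSpan lam k rv re rf := Submodule.subset_span ⟨α, hα, i, a, rfl⟩
      rw [add_tsub_cancel_right] at h1
      simpa using Submodule.add_mem _ h2 h1

/-- Modulo edge differences, every bubble function is a multiple of one monomial. -/
theorem exists_sub_smul_normBern_mem_edgeSpan (lam : Fin 4 → ((Fin 3 → ℝ) →ᵃ[ℝ] ℝ)) {k : ℕ}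
    {rv re rf : ℤ} (hrf : 0 ≤ rf) (hre : 2 * rf + 1 ≤ re) (hrv : 2 * re ≤ rv)
    (hk : 2 * rv + 1 ≤ (k : ℤ)) :
    ∃ γ : Fin 4 → ℕ, ∀ p ∈ bubbleSpace lam (k - 1) (rv - 1) (re - 1) (rf - 1),
      ∃ s : ℝ, p - s • normBern lam γ ∈ edgeSpan lam k rv re rf := by
  obtain ⟨c, hcsum, hc⟩ : ∃ c : Fin 4 → ℕ, ∑ i, c i = k ∧ ∀ i j, c i ≤ c j + 1 := by
    refine ⟨fun i => (k + i) / 4, ?_, fun i j => ?_⟩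
    · simp [Fin.sum_univ_four]
      omega
    · have := i.isLt
      have := j.isLt
      dsimp only
      omega
  refine ⟨c - Pi.single 0 1, fun p hp => ?_⟩
  induction hp using Submodule.span_induction with
  | mem p hp =>
    obtain ⟨β, hβ, rfl⟩ := hp
    obtain ⟨i, hi⟩ := exists_add_single_mem_interiorLattice hrf hre hrv hk hβ
    refine ⟨∏ i, ((β i).factorial : ℝ), ?_⟩
    have := normBern_lower_sub_mem_edgeSpan lam hcsum hc hi i
    rw [add_tsub_cancel_right] at this
    rw [bernBary3_eq_smul_normBern, ← smul_sub]
    exact Submodule.smul_mem _ _ this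
  | zero => exact ⟨0, by simp⟩
  | add p q _ _ hp hq =>
    obtain ⟨a, ha⟩ := hp
    obtain ⟨b, hb⟩ := hq
    refine ⟨a + b, ?_⟩
    rw [add_smul, add_sub_add_comm]
    exact Submodule.add_mem _ ha hb
  | smul d p _ hp =>
    obtain ⟨a, ha⟩ := hp
    refine ⟨d * a, ?_⟩
    rw [mul_smul, ← smul_sub]
    exact Submodule.smul_mem _ _ ha

theorem edgeSpan_le_bubbleSpace (lam : Fin 4 → ((Fin 3 → ℝ) →ᵃ[ℝ] ℝ)) {k : ℕ}
    {rv re rf : ℤ} (hrf : 0 ≤ rf) :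
    edgeSpan lam k rv re rf ≤ bubbleSpace lam (k - 1) (rv - 1) (re - 1) (rf - 1) := by
  refine Submodule.span_le.2 ?_
  rintro _ ⟨α, hα, i, j, rfl⟩
  exact Submodule.sub_mem _ (normBern_mem_bubbleSpace (interiorLattice_lower hrf hα i))
    (normBern_mem_bubbleSpace (interiorLattice_lower hrf hα j))

theorem integrableOn_and_setIntegral_eq_zero {v : Fin 4 → (Fin 3 → ℝ)}
    (hv : AffineIndependent ℝ v) {lam : Fin 4 → ((Fin 3 → ℝ) →ᵃ[ℝ] ℝ)}
    (hlam : ∀ i j, lam i (v j) = if i = j then 1 else 0)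
    (hsum : ∀ x : Fin 3 → ℝ, ∑ i, lam i x = 1) {k : ℕ} {rv re rf : ℤ} (hrf : 0 ≤ rf)
    {p : (Fin 3 → ℝ) → ℝ} (hp : p ∈ edgeSpan lam k rv re rf) :
    IntegrableOn p (convexHull ℝ (Set.range v)) ∧
      ∫ x in convexHull ℝ (Set.range v), p x = 0 := by
  induction hp using Submodule.span_induction with
  | mem p hp =>
    obtain ⟨α, hα, i, j, rfl⟩ := hp
    constructor
    · exact ((contDiff_normBern lam _ (n := 0)).sub
        (contDiff_normBern lam _)).continuous.continuousOn.integrableOn_compact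
          (isCompact_tetrahedron v)
    · simpa only [fderiv_normBern_edge hlam (interiorLattice_pos hrf hα)] using
        setIntegral_fderiv_normBern_eq_zero hv hlam hsum (interiorLattice_pos hrf hα) (v i - v j)
  | zero => exact ⟨integrableOn_zero, by simp⟩
  | add p q _ _ hp hq =>
    exact ⟨hp.1.add hq.1, (integral_add hp.1 hq.1).trans (by rw [hp.2, hq.2, add_zero])⟩
  | smul c p _ hp =>
    exact ⟨hp.1.smul c, (integral_smul c p).trans (by rw [hp.2, smul_zero])⟩

/-- Every edge difference combination is the divergence of a bubble vector field. -/
theorem exists_diverg_eq_of_mem_edgeSpan {v : Fin 4 → (Fin 3 → ℝ)}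
    {lam : Fin 4 → ((Fin 3 → ℝ) →ᵃ[ℝ] ℝ)}
    (hlam : ∀ i j, lam i (v j) = if i = j then 1 else 0)
    (hsum : ∀ x : Fin 3 → ℝ, ∑ i, lam i x = 1) {k : ℕ} {rv re rf : ℤ} (hrf : 0 ≤ rf)
    {p : (Fin 3 → ℝ) → ℝ} (hp : p ∈ edgeSpan lam k rv re rf) :
    ∃ u : (Fin 3 → ℝ) → (Fin 3 → ℝ),
      (∀ m : Fin 3, (fun x => u x m) ∈ bubbleSpace lam k rv re rf) ∧ p = diverg u := by
  have hdiff {f : (Fin 3 → ℝ) → ℝ} (hf : f ∈ bubbleSpace lam k rv re rf) : Differentiable ℝ f :=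
    (differentiable_and_fderiv_mem_edgeSpan hsum hrf hf 0).1
  induction hp using Submodule.span_induction with
  | mem p hp =>
    obtain ⟨α, hα, i, j, rfl⟩ := hp
    have hmem : normBern lam α ∈ bubbleSpace lam k rv re rf := normBern_mem_bubbleSpace hα
    refine ⟨fun x m => (v i - v j) m * normBern lam α x,
      fun m => Submodule.smul_mem _ ((v i - v j) m) hmem, ?_⟩
    ext x
    rw [← fderiv_normBern_edge hlam (interiorLattice_pos hrf hα), diverg]
    conv_lhs => rw [pi_eq_sum_univ' (v i - v j)]
    rw [map_sum]
    refine Finset.sum_congr rfl fun m _ => ?_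
    rw [fderiv_const_mul (hdiff hmem x), map_smul]
    simp only [_root_.smul_apply]
  | zero =>
    refine ⟨0, fun m => Submodule.zero_mem _, ?_⟩
    ext x
    simp [diverg]
  | add p q _ _ hp hq =>
    obtain ⟨a, ha, rfl⟩ := hp
    obtain ⟨b, hb, rfl⟩ := hq
    refine ⟨a + b, fun m => Submodule.add_mem _ (ha m) (hb m), ?_⟩
    ext x
    simp only [diverg, Pi.add_apply, ← Finset.sum_add_distrib]
    refine Finset.sum_congr rfl fun m _ => ?_
    rw [fderiv_fun_add (hdiff (ha m) x) (hdiff (hb m) x), _root_.add_apply]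
  | smul c p _ hp =>
    obtain ⟨a, ha, rfl⟩ := hp
    refine ⟨c • a, fun m => Submodule.smul_mem _ c (ha m), ?_⟩
    ext x
    simp only [diverg, Pi.smul_apply, Finset.smul_sum]
    refine Finset.sum_congr rfl fun m _ => ?_
    rw [fderiv_fun_const_smul (hdiff (ha m) x), _root_.smul_apply]

/-- div stability of bubble spaces, `div 𝔹³_k(T; r₂) = 𝔹_{k−1}(T; r₃)/ℝ`,
for `r₂ = (rᵛ, rᵉ, r^f)` with `r^f ≥ 0`, `rᵉ ≥ 2r^f + 1`, `rᵛ ≥ 2rᵉ`, `k ≥ 2rᵛ + 1`,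
and `r₃ = r₂ − 1`, assuming `S₃(T, r₃, k−1) ≠ ∅`. -/
theorem div_bubble_stability
    (v : Fin 4 → (Fin 3 → ℝ)) (hv : AffineIndependent ℝ v)
    (lam : Fin 4 → ((Fin 3 → ℝ) →ᵃ[ℝ] ℝ))
    (hlam : ∀ i j, lam i (v j) = if i = j then 1 else 0)
    (hsum : ∀ x : Fin 3 → ℝ, ∑ i, lam i x = 1)
    (rv re rf : ℤ) (hrf : 0 ≤ rf) (hre : 2 * rf + 1 ≤ re) (hrv : 2 * re ≤ rv)
    (k : ℕ) (hk : 2 * rv + 1 ≤ (k : ℤ))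
    (hS : (interiorLattice (k - 1) (rv - 1) (re - 1) (rf - 1)).Nonempty) :
    {p : (Fin 3 → ℝ) → ℝ | ∃ u : (Fin 3 → ℝ) → (Fin 3 → ℝ),
        (∀ m : Fin 3, (fun x => u x m) ∈ bubbleSpace lam k rv re rf) ∧ p = diverg u}
      = {p : (Fin 3 → ℝ) → ℝ |
          p ∈ bubbleSpace lam (k - 1) (rv - 1) (re - 1) (rf - 1) ∧
          (∫ x in convexHull ℝ (Set.range v), p x) = 0} := by
  ext p
  constructor
  · rintro ⟨u, hu, rfl⟩
    have hmem : diverg u ∈ edgeSpan lam k rv re rf := by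
      have heq : diverg u = ∑ m, fun x => fderiv ℝ (fun y => u y m) x (Pi.single m 1) := by
        ext x
        simp [diverg]
      rw [heq]
      exact Submodule.sum_mem _ fun m _ =>
        (differentiable_and_fderiv_mem_edgeSpan hsum hrf (hu m) _).2
    exact ⟨edgeSpan_le_bubbleSpace lam hrf hmem,
      (integrableOn_and_setIntegral_eq_zero hv hlam hsum hrf hmem).2⟩
  · rintro ⟨hp, hint⟩
    obtain ⟨γ, hγ⟩ := exists_sub_smul_normBern_mem_edgeSpan lam hrf hre hrv hk
    obtain ⟨s, hs⟩ := hγ p hp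
    obtain ⟨hi, hz⟩ := integrableOn_and_setIntegral_eq_zero hv hlam hsum hrf hs
    have hpos := setIntegral_normBern_pos hv hlam γ
    have hγi : IntegrableOn (normBern lam γ) (convexHull ℝ (Set.range v)) :=
      (contDiff_normBern lam γ (n := 0)).continuous.continuousOn.integrableOn_compact
        (isCompact_tetrahedron v)
    have hsplit : ∫ x in convexHull ℝ (Set.range v), p x =
        (∫ x in convexHull ℝ (Set.range v), (p - s • normBern lam γ) x) +
          s * ∫ x in convexHull ℝ (Set.range v), normBern lam γ x := by
      rw [← integral_const_mul, ← integral_add hi (hγi.const_mul s)]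
      simp
    rw [hint, hz, zero_add, zero_eq_mul, or_iff_left hpos.ne'] at hsplit
    rw [hsplit, zero_smul, sub_zero] at hs
    exact exists_diverg_eq_of_mem_edgeSpan hlam hsum hrf hs
end
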